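/- Let n ≥ 2 and let ε ∈ (0, 1/√3), corresponding to a cone 𝒪_θ with θ = 2·arccos(ε) ∈ (2·arccos(1/√3), π). Then there exist α = α(ε) ∈ (1, 2) and a constant a₀ > 0 such that for every a > a₀ and every smooth compactly supported function u on Q_θ = (𝒪_θ ∩ {x₁ > 1}) × (0,1), the following Carleman inequality holds: ∫_{Q_θ} e^{2φ(x,t)} [ a(Λ(t) + φ̃(x))·u² + |∇u|² ] dx dt ≤ 4 ∫_{Q_θ} e^{2φ(x,t)} |∂ₜu + Δu|² dx dt, where φ(x,t) = a·Λ(t)·φ̃(x) + t², Λ(t) = (1−t)/t^{α/2}, and φ̃(x) = x₁^α − ε^α |x|^α. -/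

import Mathlib

open Real Set Filter MeasureTheory

/-- The Laplacian of `f` at `x`, computed as the sum of the second partial
derivatives in the coordinate directions. -/
noncomputable def lap {n : ℕ} (f : EuclideanSpace ℝ (Fin n) → ℝ)
    (x : EuclideanSpace ℝ (Fin n)) : ℝ :=
  ∑ i, fderiv ℝ (fun y => fderiv ℝ f y (EuclideanSpace.single i 1)) x
      (EuclideanSpace.single i 1)

/-- The open cone `𝒪_θ = {x : x₁ > |x| cos (θ/2)}` in `ℝⁿ`. -/
def cone (n : ℕ) [NeZero n] (θ : ℝ) : Set (EuclideanSpace ℝ (Fin n)) :=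
  {x | ‖x‖ * Real.cos (θ / 2) < x 0}

open scoped ContDiff Topology

section IntegralZero

variable {V : Type*} [MeasurableSpace V] (μ : Measure V)

/-- An integrable function whose integral vanishes. -/
def IntegralZero (F : V → ℝ) : Prop := Integrable F μ ∧ ∫ p, F p ∂μ = 0

variable {μ}

theorem IntegralZero.add {F G : V → ℝ} (hF : IntegralZero μ F) (hG : IntegralZero μ G) :
    IntegralZero μ (fun p => F p + G p) :=
  ⟨hF.1.add hG.1, by rw [integral_add hF.1 hG.1, hF.2, hG.2, add_zero]⟩

theorem IntegralZero.sum {ι : Type*} (s : Finset ι) {F : ι → V → ℝ}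
    (hF : ∀ i, IntegralZero μ (F i)) : IntegralZero μ (fun p => ∑ i ∈ s, F i p) :=
  ⟨integrable_finsetSum _ fun i _ => (hF i).1, by
    rw [integral_finsetSum _ fun i _ => (hF i).1]
    exact Finset.sum_eq_zero fun i _ => (hF i).2⟩

end IntegralZero

section DirectionalDerivative

variable {V : Type*} [NormedAddCommGroup V] [NormedSpace ℝ V]

/-- The derivative of `g` in the direction `w`. -/
noncomputable def dirDeriv (w : V) (g : V → ℝ) : V → ℝ := fun p => fderiv ℝ g p w

theorem ContDiff.dirDeriv {g : V → ℝ} (hg : ContDiff ℝ ∞ g) (w : V) :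
    ContDiff ℝ ∞ (dirDeriv w g) :=
  (hg.fderiv_right (m := ∞) (by simp)).clm_apply contDiff_const

theorem HasCompactSupport.dirDeriv {g : V → ℝ} (hg : HasCompactSupport g) (w : V) :
    HasCompactSupport (dirDeriv w g) :=
  hg.fderiv_apply ℝ w

theorem Filter.EventuallyEq.dirDeriv {f g : V → ℝ} {p : V} (h : f =ᶠ[𝓝 p] g) (w : V) :
    dirDeriv w f =ᶠ[𝓝 p] dirDeriv w g :=
  h.fderiv.fun_comp (fun L : V →L[ℝ] ℝ => L w)

theorem HasFDerivAt.dirDeriv_eq {g : V → ℝ} {g' : V →L[ℝ] ℝ} {p : V} (h : HasFDerivAt g g' p)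
    (w : V) : dirDeriv w g p = g' w := by
  rw [dirDeriv, h.fderiv]

theorem dirDeriv_mul {f g : V → ℝ} (hf : ContDiff ℝ ∞ f) (hg : ContDiff ℝ ∞ g) (w p : V) :
    dirDeriv w (fun q => f q * g q) p = dirDeriv w f p * g p + f p * dirDeriv w g p := by
  rw [((hf.differentiable (by simp) p).hasFDerivAt.fun_mul
    (hg.differentiable (by simp) p).hasFDerivAt).dirDeriv_eq]
  simp [dirDeriv]
  ring

theorem dirDeriv_const (c : ℝ) (w p : V) : dirDeriv w (fun _ => c) p = 0 := by
  simp [dirDeriv]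

theorem dirDeriv_neg {g : V → ℝ} (w p : V) :
    dirDeriv w (fun q => -g q) p = -dirDeriv w g p := by
  simp [dirDeriv, fderiv_fun_neg]

theorem dirDeriv_add {f g : V → ℝ} (hf : ContDiff ℝ ∞ f) (hg : ContDiff ℝ ∞ g) (w p : V) :
    dirDeriv w (fun q => f q + g q) p = dirDeriv w f p + dirDeriv w g p := by
  rw [((hf.differentiable (by simp) p).hasFDerivAt.fun_add
    (hg.differentiable (by simp) p).hasFDerivAt).dirDeriv_eq]
  simp [dirDeriv]

theorem dirDeriv_sub {f g : V → ℝ} (hf : ContDiff ℝ ∞ f) (hg : ContDiff ℝ ∞ g) (w p : V) :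
    dirDeriv w (fun q => f q - g q) p = dirDeriv w f p - dirDeriv w g p := by
  rw [((hf.differentiable (by simp) p).hasFDerivAt.fun_sub
    (hg.differentiable (by simp) p).hasFDerivAt).dirDeriv_eq]
  simp [dirDeriv]

theorem dirDeriv_sum {ι : Type*} (s : Finset ι) {g : ι → V → ℝ} (hg : ∀ i, ContDiff ℝ ∞ (g i))
    (w p : V) : dirDeriv w (fun q => ∑ i ∈ s, g i q) p = ∑ i ∈ s, dirDeriv w (g i) p := by
  rw [(HasFDerivAt.fun_sum fun i _ => ((hg i).differentiable (by simp) p).hasFDerivAt).dirDeriv_eq]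
  simp [dirDeriv]

theorem dirDeriv_comm {g : V → ℝ} (hg : ContDiff ℝ ∞ g) (w z : V) :
    dirDeriv w (dirDeriv z g) = dirDeriv z (dirDeriv w g) := by
  funext p
  have hd : DifferentiableAt ℝ (fderiv ℝ g) p :=
    ((hg.fderiv_right (m := ∞) (by simp)).differentiable (by simp)) p
  have key : ∀ a b : V, dirDeriv a (dirDeriv b g) p = fderiv ℝ (fderiv ℝ g) p a b := by
    intro a b
    have := (hd.hasFDerivAt.clm_apply (hasFDerivAt_const b p))
    rw [HasFDerivAt.dirDeriv_eq (g := dirDeriv b g) this]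
    simp
  rw [key, key]
  exact (hg.contDiffAt.isSymmSndFDerivAt (by
    rw [minSmoothness_of_isRCLikeNormedField]; exact WithTop.coe_le_coe.2 le_top)).eq w z

theorem dirDeriv_exp_mul {u φ : V → ℝ} (hu : ContDiff ℝ ∞ u) (hφ : ContDiff ℝ ∞ φ) (w p : V) :
    dirDeriv w (fun q => Real.exp (φ q) * u q) p =
      Real.exp (φ p) * (dirDeriv w u p + dirDeriv w φ p * u p) := by
  rw [((hφ.differentiable (by simp) p).hasFDerivAt.exp.fun_mul
    (hu.differentiable (by simp) p).hasFDerivAt).dirDeriv_eq]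
  simp [dirDeriv]
  ring

theorem dirDeriv_dirDeriv_exp_mul {u φ : V → ℝ} (hu : ContDiff ℝ ∞ u) (hφ : ContDiff ℝ ∞ φ)
    (w p : V) : dirDeriv w (dirDeriv w (fun q => Real.exp (φ q) * u q)) p =
      Real.exp (φ p) * (dirDeriv w (dirDeriv w u) p + 2 * dirDeriv w φ p * dirDeriv w u p
        + dirDeriv w (dirDeriv w φ) p * u p + dirDeriv w φ p ^ 2 * u p) := by
  have h₁ := hu.dirDeriv w
  have h₂ := hφ.dirDeriv w
  have : dirDeriv w (fun q => Real.exp (φ q) * u q) =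
      fun q => Real.exp (φ q) * (dirDeriv w u q + dirDeriv w φ q * u q) :=
    funext fun q => dirDeriv_exp_mul hu hφ w q
  rw [this, dirDeriv_exp_mul (by fun_prop) hφ, dirDeriv_add h₁ (by fun_prop), dirDeriv_mul h₂ hu]
  ring

variable [MeasurableSpace V] {μ : Measure V} [BorelSpace V] [μ.IsAddHaarMeasure]

theorem ContDiff.integrable_of_hasCompactSupport {g : V → ℝ} (hg : ContDiff ℝ ∞ g)
    (hc : HasCompactSupport g) : Integrable g μ :=
  hg.continuous.integrable_of_hasCompactSupport hc

theorem integralZero_dirDeriv [FiniteDimensional ℝ V] {g : V → ℝ} (hg : ContDiff ℝ ∞ g)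
    (hc : HasCompactSupport g) (w : V) : IntegralZero μ (dirDeriv w g) := by
  have hi : Integrable (_root_.dirDeriv w g) μ :=
    (hg.dirDeriv w).integrable_of_hasCompactSupport (hc.dirDeriv w)
  refine ⟨hi, ?_⟩
  have := integral_mul_fderiv_eq_neg_fderiv_mul_of_integrable (μ := μ) (𝕜 := ℝ)
    (f := fun _ : V => (1 : ℝ)) (g := g) (v := w) (by simp)
    (by simp only [one_mul]; exact hi)
    (by simpa using hg.integrable_of_hasCompactSupport hc)
    (fun x _ => differentiableAt_const _) (fun x _ => hg.differentiable (by simp) x)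
  simpa [dirDeriv] using this

end DirectionalDerivative

section Commutator

variable {V : Type*} [NormedAddCommGroup V] [NormedSpace ℝ V] [MeasurableSpace V] [BorelSpace V]
  [FiniteDimensional ℝ V] {μ : Measure V} [μ.IsAddHaarMeasure] {v φ h W : V → ℝ}

theorem integralZero_second_mul_first (hv : ContDiff ℝ ∞ v) (hc : HasCompactSupport v)
    (a τ : V) : IntegralZero μ
      (fun p => 2 * dirDeriv a (dirDeriv a v) p * dirDeriv τ v p) := by
  have hva := hv.dirDeriv a
  have hvτ := hv.dirDeriv τ
  have hca := hc.dirDeriv a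
  have h₁ := integralZero_dirDeriv (μ := μ) (g := fun p => (2 * dirDeriv τ v p) * dirDeriv a v p)
    (by fun_prop) hca.mul_left a
  have h₂ := integralZero_dirDeriv (μ := μ) (g := fun p => (-dirDeriv a v p) * dirDeriv a v p)
    (by fun_prop) hca.mul_left τ
  convert h₁.add h₂ using 2 with p
  simp (disch := fun_prop) only [dirDeriv_mul, dirDeriv_const, dirDeriv_neg, dirDeriv_comm hv τ a]
  ring

theorem integralZero_transport (hv : ContDiff ℝ ∞ v) (hc : HasCompactSupport v)
    (hφ : ContDiff ℝ ∞ φ) (a b : V) : IntegralZero μ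
      (fun p => -4 * dirDeriv a (dirDeriv a v) p * (dirDeriv b φ p * dirDeriv b v p)
        - 4 * dirDeriv a (dirDeriv b φ) p * dirDeriv a v p * dirDeriv b v p
        + 2 * dirDeriv b (dirDeriv b φ) p * dirDeriv a v p ^ 2) := by
  have hva := hv.dirDeriv a
  have hvb := hv.dirDeriv b
  have hφb := hφ.dirDeriv b
  have hca := hc.dirDeriv a
  have h₁ := integralZero_dirDeriv (μ := μ)
    (g := fun p => (-4 * (dirDeriv b φ p * dirDeriv b v p)) * dirDeriv a v p)
    (by fun_prop) hca.mul_left a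
  have h₂ := integralZero_dirDeriv (μ := μ)
    (g := fun p => (2 * (dirDeriv b φ p * dirDeriv a v p)) * dirDeriv a v p)
    (by fun_prop) hca.mul_left b
  convert h₁.add h₂ using 2 with p
  simp (disch := fun_prop) only [dirDeriv_mul, dirDeriv_const, dirDeriv_comm hv b a]
  ring

theorem integralZero_zeroth_mul_second (hv : ContDiff ℝ ∞ v) (hc : HasCompactSupport v)
    (hh : ContDiff ℝ ∞ h) (a : V) : IntegralZero μ
      (fun p => -2 * dirDeriv a (dirDeriv a v) p * (h p * v p) - 2 * h p * dirDeriv a v p ^ 2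
        + dirDeriv a (dirDeriv a h) p * v p ^ 2) := by
  have hva := hv.dirDeriv a
  have hha := hh.dirDeriv a
  have hca := hc.dirDeriv a
  have h₁ := integralZero_dirDeriv (μ := μ)
    (g := fun p => (-2 * (h p * v p)) * dirDeriv a v p) (by fun_prop) hca.mul_left a
  have h₂ := integralZero_dirDeriv (μ := μ)
    (g := fun p => (dirDeriv a h p * v p) * v p) (by fun_prop) hc.mul_left a
  convert h₁.add h₂ using 2 with p
  simp (disch := fun_prop) only [dirDeriv_mul, dirDeriv_const]
  ring

theorem integralZero_zeroth_mul_first (hv : ContDiff ℝ ∞ v) (hc : HasCompactSupport v)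
    (hW : ContDiff ℝ ∞ W) (a : V) : IntegralZero μ
      (fun p => 2 * (W p * v p) * dirDeriv a v p + dirDeriv a W p * v p ^ 2) := by
  have hva := hv.dirDeriv a
  have h₁ := integralZero_dirDeriv (μ := μ)
    (g := fun p => (W p * v p) * v p) (by fun_prop) hc.mul_left a
  convert h₁ using 2 with p
  simp (disch := fun_prop) only [dirDeriv_mul]
  ring

/-- Integration by parts for the product of the symmetric part `Δ + W` and of the
antisymmetric part `∂_τ - 2 ∇φ · ∇ - h` (up to a zeroth order term) of a conjugated
parabolic operator. -/
theorem integralZero_commutator {ι : Type*} [Fintype ι] (e : ι → V) (τ : V)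
    (hv : ContDiff ℝ ∞ v) (hc : HasCompactSupport v) (hφ : ContDiff ℝ ∞ φ)
    (hh : ContDiff ℝ ∞ h) (hW : ContDiff ℝ ∞ W) : IntegralZero μ (fun p =>
      2 * (∑ i, dirDeriv (e i) (dirDeriv (e i) v) p + W p * v p) *
        (dirDeriv τ v p - 2 * ∑ j, dirDeriv (e j) φ p * dirDeriv (e j) v p - h p * v p)
      - (4 * ∑ i, ∑ j, dirDeriv (e i) (dirDeriv (e j) φ) p * dirDeriv (e i) v p *
            dirDeriv (e j) v p
        + 2 * (h p - ∑ j, dirDeriv (e j) (dirDeriv (e j) φ) p) * ∑ i, dirDeriv (e i) v p ^ 2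
        + v p ^ 2 * (-∑ i, dirDeriv (e i) (dirDeriv (e i) h) p - dirDeriv τ W p
          + 2 * ∑ j, dirDeriv (e j) W p * dirDeriv (e j) φ p
          - 2 * W p * (h p - ∑ j, dirDeriv (e j) (dirDeriv (e j) φ) p)))) := by
  have h₁ := IntegralZero.sum Finset.univ
    fun i => integralZero_second_mul_first (μ := μ) hv hc (e i) τ
  have h₂ := IntegralZero.sum Finset.univ fun i => IntegralZero.sum Finset.univ
    fun j => integralZero_transport (μ := μ) hv hc hφ (e i) (e j)
  have h₃ := IntegralZero.sum Finset.univ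
    fun i => integralZero_zeroth_mul_second (μ := μ) hv hc hh (e i)
  have h₄ := integralZero_zeroth_mul_first (μ := μ) hv hc hW τ
  have h₅ := IntegralZero.sum Finset.univ fun j => integralZero_zeroth_mul_first (μ := μ) hv hc
    (W := fun p => -2 * (W p * dirDeriv (e j) φ p))
    (by have := hφ.dirDeriv (e j); fun_prop) (e j)
  convert ((((h₁.add h₂).add h₃).add h₄).add h₅) using 2 with p
  have e₅ : ∀ j, dirDeriv (e j) (fun p => -2 * (W p * dirDeriv (e j) φ p)) p =
      -2 * (dirDeriv (e j) W p * dirDeriv (e j) φ p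
        + W p * dirDeriv (e j) (dirDeriv (e j) φ) p) := by
    intro j
    have := hφ.dirDeriv (e j)
    simp (disch := fun_prop) only [dirDeriv_mul, dirDeriv_const]
    ring
  have s₁ : ∑ i, 2 * dirDeriv (e i) (dirDeriv (e i) v) p * dirDeriv τ v p =
      2 * (∑ i, dirDeriv (e i) (dirDeriv (e i) v) p) * dirDeriv τ v p := by
    rw [Finset.mul_sum, Finset.sum_mul]
  have s₂ : ∑ i, ∑ j, (-4 * dirDeriv (e i) (dirDeriv (e i) v) p *
        (dirDeriv (e j) φ p * dirDeriv (e j) v p)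
        - 4 * dirDeriv (e i) (dirDeriv (e j) φ) p * dirDeriv (e i) v p * dirDeriv (e j) v p
        + 2 * dirDeriv (e j) (dirDeriv (e j) φ) p * dirDeriv (e i) v p ^ 2) =
      -4 * ((∑ i, dirDeriv (e i) (dirDeriv (e i) v) p) *
        ∑ j, dirDeriv (e j) φ p * dirDeriv (e j) v p)
      - 4 * ∑ i, ∑ j, dirDeriv (e i) (dirDeriv (e j) φ) p * dirDeriv (e i) v p *
            dirDeriv (e j) v p
      + 2 * ((∑ i, dirDeriv (e i) v p ^ 2) * ∑ j, dirDeriv (e j) (dirDeriv (e j) φ) p) := by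
    rw [Finset.sum_mul_sum, Finset.sum_mul_sum]
    simp only [Finset.mul_sum, ← Finset.sum_add_distrib, ← Finset.sum_sub_distrib]
    refine Finset.sum_congr rfl fun i _ => Finset.sum_congr rfl fun j _ => ?_
    ring
  have s₃ : ∑ i, (-2 * dirDeriv (e i) (dirDeriv (e i) v) p * (h p * v p)
        - 2 * h p * dirDeriv (e i) v p ^ 2 + dirDeriv (e i) (dirDeriv (e i) h) p * v p ^ 2) =
      (∑ i, dirDeriv (e i) (dirDeriv (e i) v) p) * (-2 * (h p * v p))
      - 2 * h p * ∑ i, dirDeriv (e i) v p ^ 2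
      + (∑ i, dirDeriv (e i) (dirDeriv (e i) h) p) * v p ^ 2 := by
    simp only [Finset.sum_mul, Finset.mul_sum, ← Finset.sum_add_distrib,
      ← Finset.sum_sub_distrib]
    refine Finset.sum_congr rfl fun i _ => ?_
    ring
  have s₅ : ∑ j, (2 * (-2 * (W p * dirDeriv (e j) φ p) * v p) * dirDeriv (e j) v p +
        -2 * (dirDeriv (e j) W p * dirDeriv (e j) φ p
          + W p * dirDeriv (e j) (dirDeriv (e j) φ) p) * v p ^ 2) =
      -4 * W p * v p * ∑ j, dirDeriv (e j) φ p * dirDeriv (e j) v p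
      - 2 * v p ^ 2 * ∑ j, dirDeriv (e j) W p * dirDeriv (e j) φ p
      - 2 * v p ^ 2 * W p * ∑ j, dirDeriv (e j) (dirDeriv (e j) φ) p := by
    simp only [Finset.mul_sum, ← Finset.sum_sub_distrib]
    refine Finset.sum_congr rfl fun j _ => ?_
    ring
  simp only [e₅]
  rw [s₁, s₂, s₃, s₅]
  ring

/-- An abstract Carleman inequality: a lower bound for the quadratic form produced by the
commutator of the conjugated operator integrates to a weighted estimate. -/
theorem integral_le_integral_sq_exp_mul {ι : Type*} [Fintype ι] (e : ι → V) (τ : V)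
    {u φ h B : V → ℝ} (hu : ContDiff ℝ ∞ u) (hc : HasCompactSupport u) (hφ : ContDiff ℝ ∞ φ)
    (hh : ContDiff ℝ ∞ h) (hBi : Integrable B μ)
    (hB : ∀ p, B p ≤
      4 * ∑ i, ∑ j, dirDeriv (e i) (dirDeriv (e j) φ) p *
          dirDeriv (e i) (fun q => Real.exp (φ q) * u q) p *
          dirDeriv (e j) (fun q => Real.exp (φ q) * u q) p
        + 2 * (h p - ∑ j, dirDeriv (e j) (dirDeriv (e j) φ) p) *
          ∑ i, dirDeriv (e i) (fun q => Real.exp (φ q) * u q) p ^ 2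
        + (Real.exp (φ p) * u p) ^ 2 * (-∑ i, dirDeriv (e i) (dirDeriv (e i) h) p
          + dirDeriv τ (dirDeriv τ φ) p
          - 4 * ∑ j, dirDeriv (e j) φ p * dirDeriv τ (dirDeriv (e j) φ) p
          + 4 * ∑ i, ∑ j, dirDeriv (e i) (dirDeriv (e j) φ) p *
              dirDeriv (e i) φ p * dirDeriv (e j) φ p
          - 2 * (∑ j, dirDeriv (e j) φ p ^ 2 - dirDeriv τ φ p) *
            (h p - ∑ j, dirDeriv (e j) (dirDeriv (e j) φ) p)
          - (h p - ∑ j, dirDeriv (e j) (dirDeriv (e j) φ) p) ^ 2)) :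
    ∫ p, B p ∂μ ≤ ∫ p, (Real.exp (φ p) *
      (dirDeriv τ u p + ∑ i, dirDeriv (e i) (dirDeriv (e i) u) p)) ^ 2 ∂μ := by
  set v : V → ℝ := fun q => Real.exp (φ q) * u q with hv_def
  set W : V → ℝ := fun q => ∑ j, dirDeriv (e j) φ q * dirDeriv (e j) φ q - dirDeriv τ φ q
    with hW_def
  have hv : ContDiff ℝ ∞ v := by fun_prop
  have hcv : HasCompactSupport v := hc.mul_left
  have hφj := fun j => hφ.dirDeriv (e j)
  have hφτ := hφ.dirDeriv τ
  have hW : ContDiff ℝ ∞ W := by fun_prop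
  have hWd : ∀ w p, dirDeriv w W p = 2 * ∑ j, dirDeriv (e j) φ p * dirDeriv w (dirDeriv (e j) φ) p
      - dirDeriv w (dirDeriv τ φ) p := by
    intro w p
    rw [hW_def, dirDeriv_sub (by fun_prop) hφτ,
      dirDeriv_sum _ (fun j => (hφj j).mul (hφj j)), Finset.mul_sum]
    congr 1
    refine Finset.sum_congr rfl fun j _ => ?_
    rw [dirDeriv_mul (hφj j) (hφj j)]
    ring
  have hZ := integralZero_commutator (μ := μ) e τ hv hcv hφ hh hW
  set Z := fun p => 2 * (∑ i, dirDeriv (e i) (dirDeriv (e i) v) p + W p * v p) *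
        (dirDeriv τ v p - 2 * ∑ j, dirDeriv (e j) φ p * dirDeriv (e j) v p - h p * v p)
      - (4 * ∑ i, ∑ j, dirDeriv (e i) (dirDeriv (e j) φ) p * dirDeriv (e i) v p *
            dirDeriv (e j) v p
        + 2 * (h p - ∑ j, dirDeriv (e j) (dirDeriv (e j) φ) p) * ∑ i, dirDeriv (e i) v p ^ 2
        + v p ^ 2 * (-∑ i, dirDeriv (e i) (dirDeriv (e i) h) p - dirDeriv τ W p
          + 2 * ∑ j, dirDeriv (e j) W p * dirDeriv (e j) φ p
          - 2 * W p * (h p - ∑ j, dirDeriv (e j) (dirDeriv (e j) φ) p))) with hZ_def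
  have hconj : ∀ p, Real.exp (φ p) *
      (dirDeriv τ u p + ∑ i, dirDeriv (e i) (dirDeriv (e i) u) p) =
      (∑ i, dirDeriv (e i) (dirDeriv (e i) v) p + W p * v p) + (dirDeriv τ v p
        - 2 * ∑ j, dirDeriv (e j) φ p * dirDeriv (e j) v p
        - (∑ j, dirDeriv (e j) (dirDeriv (e j) φ) p) * v p) := by
    intro p
    have s : ∑ i, dirDeriv (e i) (dirDeriv (e i) v) p
        + (∑ j, dirDeriv (e j) φ p * dirDeriv (e j) φ p) * v p
        - 2 * ∑ j, dirDeriv (e j) φ p * dirDeriv (e j) v p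
        - (∑ j, dirDeriv (e j) (dirDeriv (e j) φ) p) * v p =
        Real.exp (φ p) * ∑ i, dirDeriv (e i) (dirDeriv (e i) u) p := by
      simp only [Finset.mul_sum, Finset.sum_mul, ← Finset.sum_add_distrib,
        ← Finset.sum_sub_distrib]
      refine Finset.sum_congr rfl fun i _ => ?_
      rw [hv_def, dirDeriv_dirDeriv_exp_mul hu hφ, dirDeriv_exp_mul hu hφ]
      ring
    rw [mul_add, ← s, hW_def, hv_def, dirDeriv_exp_mul hu hφ]
    ring
  have hR : Integrable (fun p => (Real.exp (φ p) *
      (dirDeriv τ u p + ∑ i, dirDeriv (e i) (dirDeriv (e i) u) p)) ^ 2) μ := by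
    refine ContDiff.integrable_of_hasCompactSupport ?_ ?_
    · have h₁ := hu.dirDeriv τ
      have h₂ := fun i => (hu.dirDeriv (e i)).dirDeriv (e i)
      fun_prop
    · refine HasCompactSupport.intro hc fun p hp => ?_
      have hz : u =ᶠ[𝓝 p] fun _ => 0 := notMem_tsupport_iff_eventuallyEq.1 hp
      have hd : ∀ w, dirDeriv w (fun _ : V => (0 : ℝ)) = fun _ => 0 :=
        fun w => funext fun p => dirDeriv_const 0 w p
      have hz' : ∀ w, dirDeriv w u =ᶠ[𝓝 p] fun _ => 0 := fun w => by
        simpa only [hd] using hz.dirDeriv w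
      have hz'' : ∀ w, dirDeriv w (dirDeriv w u) p = 0 := fun w => by
        simpa only [hd] using ((hz' w).dirDeriv w).eq_of_nhds
      simp [hz'', (hz' τ).eq_of_nhds]
  calc ∫ p, B p ∂μ ≤ ∫ p, ((Real.exp (φ p) *
      (dirDeriv τ u p + ∑ i, dirDeriv (e i) (dirDeriv (e i) u) p)) ^ 2 - Z p) ∂μ := by
        refine integral_mono hBi (hR.sub hZ.1) fun p => (hB p).trans ?_
        have s : 2 * ∑ j, dirDeriv (e j) W p * dirDeriv (e j) φ p =
            4 * ∑ i, ∑ j, dirDeriv (e i) (dirDeriv (e j) φ) p *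
              dirDeriv (e i) φ p * dirDeriv (e j) φ p
            - 2 * ∑ j, dirDeriv (e j) φ p * dirDeriv τ (dirDeriv (e j) φ) p := by
          simp only [Finset.mul_sum, ← Finset.sum_sub_distrib]
          refine Finset.sum_congr rfl fun i _ => ?_
          rw [hWd, dirDeriv_comm hφ (e i) τ, mul_sub_right_distrib, mul_sub, Finset.mul_sum,
            Finset.sum_mul, Finset.mul_sum]
          congr 1
          · exact Finset.sum_congr rfl fun j _ => by ring
          · ring
        have hWp : W p = ∑ j, dirDeriv (e j) φ p ^ 2 - dirDeriv τ φ p := by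
          simp only [hW_def, sq]
        simp only [hconj, hZ_def, s, hWd τ]
        rw [← hWp]
        generalize ∑ i, dirDeriv (e i) (dirDeriv (e i) v) p = X₁
        generalize ∑ j, dirDeriv (e j) (dirDeriv (e j) φ) p = X₂
        generalize ∑ j, dirDeriv (e j) φ p * dirDeriv (e j) v p = X₃
        have hvp : Real.exp (φ p) * u p = v p := rfl
        rw [hvp]
        nlinarith [sq_nonneg (dirDeriv τ v p - 2 * X₃ - X₂ * v p),
          sq_nonneg (X₁ + W p * v p + (h p - X₂) * v p)]
    _ = _ := by rw [integral_sub hR hZ.1, hZ.2, sub_zero]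

end Commutator

section PointwiseBounds

theorem exists_exponent {ε : ℝ} (hε : ε ∈ Ioo (0 : ℝ) (1 / √3)) :
    ∃ α ∈ Ioo (3 / 2 : ℝ) 2, ε ^ α < 1 / 3 ∧ 4 * ε ^ α < α * (1 - ε ^ α) ∧
      2 * (ε ^ α) ^ 3 * (1 - ε ^ 2) < (α - 1 - 2 * ε ^ α) * ε ^ 2 * (1 - ε ^ α) ^ 2 := by
  obtain ⟨h0, h1⟩ := hε
  have hsq : ε ^ 2 < 1 / 3 := by
    have := pow_lt_pow_left₀ h1 h0.le two_ne_zero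
    rwa [div_pow, Real.sq_sqrt (by norm_num), one_pow] at this
  have hpos : 0 < ε ^ 2 := by positivity
  have hc : ContinuousAt (fun α : ℝ => ε ^ α) 2 := Real.continuousAt_const_rpow h0.ne'
  have h2 : ε ^ (2 : ℝ) = ε ^ 2 := Real.rpow_two ε
  have e₀ : ∀ᶠ α : ℝ in 𝓝 2, 3 / 2 < α := eventually_gt_nhds (by norm_num)
  have e₁ : ∀ᶠ α : ℝ in 𝓝 2, ε ^ α < 1 / 3 :=
    hc.eventually_lt continuousAt_const (by rw [h2]; exact hsq)
  have e₂ : ∀ᶠ α : ℝ in 𝓝 2, 4 * ε ^ α < α * (1 - ε ^ α) :=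
    ContinuousAt.eventually_lt (by fun_prop) (by fun_prop) (by rw [h2]; linarith)
  have e₃ : ∀ᶠ α : ℝ in 𝓝 2, 2 * (ε ^ α) ^ 3 * (1 - ε ^ 2) <
      (α - 1 - 2 * ε ^ α) * ε ^ 2 * (1 - ε ^ α) ^ 2 := by
    refine ContinuousAt.eventually_lt (by fun_prop) (by fun_prop) ?_
    rw [h2]
    have : (2 - 1 - 2 * ε ^ 2) * ε ^ 2 * (1 - ε ^ 2) ^ 2 - 2 * (ε ^ 2) ^ 3 * (1 - ε ^ 2) =
        ε ^ 2 * (1 - ε ^ 2) * (1 - 3 * ε ^ 2) := by ring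
    have : 0 < ε ^ 2 * (1 - ε ^ 2) * (1 - 3 * ε ^ 2) :=
      mul_pos (mul_pos hpos (by linarith)) (by linarith)
    linarith
  obtain ⟨α, hα, h⟩ := ((((e₀.and e₁).and e₂).and e₃).filter_mono
    nhdsWithin_le_nhds |>.and self_mem_nhdsWithin : ∀ᶠ α in 𝓝[<] (2 : ℝ), _).exists
  exact ⟨α, ⟨hα.1.1.1, h⟩, hα.1.1.2, hα.1.2, hα.2⟩

theorem cubic_bound {α b ε y z ξ ρ : ℝ} (hb : 0 < b) (hb3 : b < 1 / 3) (hε : 0 < ε)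
    (hε1 : ε < 1)
    (hC : 2 * b ^ 3 * (1 - ε ^ 2) < (α - 1 - 2 * b) * ε ^ 2 * (1 - b) ^ 2) (hz : 0 < z)
    (hzy : z ≤ y) (hρ : ε ^ 2 * ρ ≤ ξ ^ 2) :
    2 * b * z * (ξ ^ 2 * (y - b * z) ^ 2 + b ^ 2 * z ^ 2 * (ρ - ξ ^ 2)) ≤
      (α - 1) * y * (ξ ^ 2 * (y - b * z) ^ 2) := by
  have hε2 : 0 < 1 - ε ^ 2 := by nlinarith
  have hpos : 0 < (α - 1 - 2 * b) * (ε ^ 2 * (1 - b) ^ 2) := by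
    have : 0 < 2 * b ^ 3 * (1 - ε ^ 2) := by positivity
    linarith
  have hαb : 0 < α - 1 - 2 * b := pos_of_mul_pos_left hpos (by positivity)
  have hA : ξ ^ 2 * ((1 - b) * z) ^ 2 ≤ ξ ^ 2 * (y - b * z) ^ 2 := by
    refine mul_le_mul_of_nonneg_left (pow_le_pow_left₀ ?_ (by linarith) 2) (sq_nonneg _)
    exact mul_nonneg (by linarith) hz.le
  set A := ξ ^ 2 * (y - b * z) ^ 2 with hAdef
  have hA0 : 0 ≤ A := by positivity
  have h₁ : (α - 1 - 2 * b) * z * (ξ ^ 2 * ((1 - b) * z) ^ 2) ≤ (α - 1 - 2 * b) * z * A :=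
    mul_le_mul_of_nonneg_left hA (by positivity)
  have h₂ : (α - 1) * z * A ≤ (α - 1) * y * A := by
    have : 0 ≤ α - 1 := by linarith
    gcongr
  have h₃ : 2 * b ^ 3 * z ^ 3 * (ε ^ 2 * (ρ - ξ ^ 2)) ≤
      2 * b ^ 3 * z ^ 3 * ((1 - ε ^ 2) * ξ ^ 2) :=
    mul_le_mul_of_nonneg_left (by linarith) (by positivity)
  have h₄ : z ^ 3 * ξ ^ 2 * (2 * b ^ 3 * (1 - ε ^ 2)) ≤
      z ^ 3 * ξ ^ 2 * ((α - 1 - 2 * b) * ε ^ 2 * (1 - b) ^ 2) :=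
    mul_le_mul_of_nonneg_left hC.le (by positivity)
  have h₅ : ε ^ 2 * (2 * b ^ 3 * z ^ 3 * (ρ - ξ ^ 2)) ≤
      ε ^ 2 * ((α - 1 - 2 * b) * z * (ξ ^ 2 * ((1 - b) * z) ^ 2)) := by linarith
  have h₆ := le_of_mul_le_mul_left h₅ (by positivity)
  linarith

/-- The scalar inequality behind the Carleman estimate. Here `Λ`, `-L₁`, `L₂` are the time weight
and its first two derivatives, `G` the squared gradient of the space weight `Φ`. -/
theorem carleman_scalar_bound {a Λ L₁ L₂ t Φ G g D κ P S v Qw QΦ : ℝ} (ha : 0 < a) (hΛ : 0 ≤ Λ)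
    (hΛL : Λ ≤ L₁) (hL₁ : 1 ≤ L₁) (hL₂ : 3 / 4 * L₁ ≤ L₂) (ht : 0 ≤ t) (hΦ : 0 ≤ Φ)
    (hκ : κ ≤ G) (hg : 0 ≤ g) (hgΦ : 2 * (g * Φ) ≤ G) (hgG : g ^ 2 ≤ G)
    (hD : D + g / 2 + 1 / 4 ≤ a * κ) (hQw : 0 ≤ 2 * Qw + g * P) (hQΦ : g * G ≤ 2 * QΦ)
    (hS : S ≤ 2 * P + 2 * (a * Λ) ^ 2 * G * v ^ 2) :
    1 / 4 * (a * (Λ + Φ) * v ^ 2 + S) ≤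
      4 * (a * Λ * Qw) + 2 * (a * Λ * g + 1 / 4) * P
        + v ^ 2 * (-(a * Λ * D) + (a * L₂ * Φ + 2) - 4 * (a * Λ * (-(a * L₁)) * G)
          + 4 * ((a * Λ) ^ 3 * QΦ)
          - 2 * ((a * Λ) ^ 2 * G - (-(a * L₁) * Φ + 2 * t)) * (a * Λ * g + 1 / 4)
          - (a * Λ * g + 1 / 4) ^ 2) := by
  have hG : 0 ≤ G := (sq_nonneg g).trans hgG
  have haΛ : 0 ≤ a * Λ := by positivity
  have hgrad : 0 ≤ 2 * (a * Λ) * (2 * Qw + g * P) := by positivity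
  have k₁ : 0 ≤ 2 * (a * Λ) ^ 3 * (2 * QΦ - g * G) := by
    have := sub_nonneg.2 hQΦ
    positivity
  have k₂ : 0 ≤ a * (a * Λ) * (G * (L₁ - Λ) + L₁ * (G - 2 * (g * Φ))
      + (L₁ - Λ) * g ^ 2 + L₁ * (G - g ^ 2)) := by
    have h₁ := sub_nonneg.2 hΛL
    have h₂ := sub_nonneg.2 hgΦ
    have h₃ := sub_nonneg.2 hgG
    have : 0 ≤ L₁ := by linarith
    positivity
  have k₃ : 0 ≤ a * Λ * (a * G * (L₁ - 1) + (a * (G - κ) + (a * κ - (D + g / 2 + 1 / 4)))) := by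
    have h₁ := sub_nonneg.2 hL₁
    have h₂ := sub_nonneg.2 hκ
    have h₃ := sub_nonneg.2 hD
    positivity
  have k₄ : 0 ≤ a * Φ * ((L₂ - 3 / 4 * L₁) + 1 / 4 * (L₁ - 1)) := by
    have h₁ := sub_nonneg.2 hL₁
    have h₂ := sub_nonneg.2 hL₂
    positivity
  have k₅ : 0 ≤ 4 * t * (a * Λ * g + 1 / 4) := by positivity
  have hv : 0 ≤ v ^ 2 * (-(a * Λ * D) + (a * L₂ * Φ + 2) - 4 * (a * Λ * (-(a * L₁)) * G)
          + 4 * ((a * Λ) ^ 3 * QΦ)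
          - 2 * ((a * Λ) ^ 2 * G - (-(a * L₁) * Φ + 2 * t)) * (a * Λ * g + 1 / 4)
          - (a * Λ * g + 1 / 4) ^ 2 - 1 / 4 * (a * (Λ + Φ)) - 1 / 2 * (a * Λ) ^ 2 * G) := by
    refine mul_nonneg (sq_nonneg v) ?_
    linarith
  linarith

end PointwiseBounds

section Weights

/-- The time weight `Λ(t) = (1 - t) / t ^ (α / 2)`. -/
noncomputable def timeWeight (α t : ℝ) : ℝ := (1 - t) / t ^ (α / 2)

/-- The negative of the first derivative of `timeWeight`. -/
noncomputable def timeWeight₁ (α t : ℝ) : ℝ :=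
  α / 2 * t ^ (-(α / 2) - 1) + (1 - α / 2) * t ^ (-(α / 2))

/-- The second derivative of `timeWeight`. -/
noncomputable def timeWeight₂ (α t : ℝ) : ℝ :=
  α / 2 * ((α / 2 + 1) * t ^ (-(α / 2) - 1 - 1)) + (1 - α / 2) * (α / 2 * t ^ (-(α / 2) - 1))

theorem timeWeight_eq {α t : ℝ} (ht : 0 < t) :
    timeWeight α t = t ^ (-(α / 2)) - t ^ (-(α / 2) + 1) := by
  rw [timeWeight, Real.rpow_add_one ht.ne', Real.rpow_neg ht.le]
  field_simp

theorem hasDerivAt_timeWeight {α t : ℝ} (ht : 0 < t) :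
    HasDerivAt (timeWeight α) (-timeWeight₁ α t) t := by
  have h := (Real.hasDerivAt_rpow_const (p := -(α / 2)) (Or.inl ht.ne')).sub
    (Real.hasDerivAt_rpow_const (p := -(α / 2) + 1) (Or.inl ht.ne'))
  refine (h.congr_of_eventuallyEq ?_).congr_deriv ?_
  · filter_upwards [eventually_gt_nhds ht] with s hs using timeWeight_eq hs
  · rw [timeWeight₁]
    ring_nf

theorem hasDerivAt_timeWeight₁ {α t : ℝ} (ht : 0 < t) :
    HasDerivAt (timeWeight₁ α) (-timeWeight₂ α t) t := by
  have h := ((Real.hasDerivAt_rpow_const (p := -(α / 2) - 1) (Or.inl ht.ne')).const_mul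
    (α / 2)).add ((Real.hasDerivAt_rpow_const (p := -(α / 2)) (Or.inl ht.ne')).const_mul
    (1 - α / 2))
  refine h.congr_deriv ?_
  rw [timeWeight₂]
  ring

theorem timeWeight_bounds {α t : ℝ} (hα : α ∈ Ioo (3 / 2 : ℝ) 2) (ht : t ∈ Ioo (0 : ℝ) 1) :
    0 ≤ timeWeight α t ∧ timeWeight α t ≤ timeWeight₁ α t ∧ 1 ≤ timeWeight₁ α t ∧
      3 / 4 * timeWeight₁ α t ≤ timeWeight₂ α t := by
  obtain ⟨ht0, ht1⟩ := ht
  obtain ⟨hα0, hα2⟩ := hα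
  have hinv : 1 ≤ t⁻¹ := (one_le_inv₀ ht0).2 ht1.le
  have e₁ : t ^ (-(α / 2) - 1) = t ^ (-(α / 2)) * t⁻¹ := by
    rw [Real.rpow_sub_one ht0.ne', div_eq_mul_inv]
  have e₂ : t ^ (-(α / 2) - 1 - 1) = t ^ (-(α / 2)) * t⁻¹ * t⁻¹ := by
    rw [Real.rpow_sub_one ht0.ne', e₁, div_eq_mul_inv]
  have hp : 1 ≤ t ^ (-(α / 2)) :=
    Real.one_le_rpow_of_pos_of_le_one_of_nonpos ht0 ht1.le (by linarith)
  have hw : timeWeight α t = t ^ (-(α / 2)) * (1 - t) := by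
    rw [timeWeight_eq ht0, Real.rpow_add_one ht0.ne']
    ring
  have h₁ : t ^ (-(α / 2)) ≤ timeWeight₁ α t := by
    rw [timeWeight₁, e₁]
    have : 0 ≤ α / 2 * (t ^ (-(α / 2)) * (t⁻¹ - 1)) := by
      have := sub_nonneg.2 hinv
      positivity
    linarith
  refine ⟨?_, ?_, hp.trans h₁, ?_⟩
  · rw [hw]
    exact mul_nonneg (by linarith) (by linarith)
  · rw [hw]
    nlinarith
  · rw [timeWeight₁, timeWeight₂, e₂, e₁]
    have q₁ : 0 ≤ t ^ (-(α / 2)) * t⁻¹ := by positivity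
    have q₂ : t ^ (-(α / 2)) * t⁻¹ ≤ t ^ (-(α / 2)) * t⁻¹ * t⁻¹ := le_mul_of_one_le_right q₁ hinv
    have q₃ : t ^ (-(α / 2)) ≤ t ^ (-(α / 2)) * t⁻¹ := le_mul_of_one_le_right (by linarith) hinv
    have r₁ : 0 ≤ α / 2 * (α / 2 + 1) * (t ^ (-(α / 2)) * t⁻¹ * t⁻¹ - t ^ (-(α / 2)) * t⁻¹) := by
      have := sub_nonneg.2 q₂
      positivity
    have r₂ : 0 ≤ α / 2 * (α / 2 + 1 - 3 / 4) * (t ^ (-(α / 2)) * t⁻¹) := by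
      have : 0 ≤ α / 2 + 1 - 3 / 4 := by linarith
      positivity
    have r₃ : 0 ≤ (1 - α / 2) * (3 / 4) * (t ^ (-(α / 2)) * t⁻¹ - t ^ (-(α / 2))) := by
      have := sub_nonneg.2 q₃
      have : 0 ≤ 1 - α / 2 := by linarith
      positivity
    have r₄ : 0 ≤ (1 - α / 2) * (α / 2 - 3 / 4) * (t ^ (-(α / 2)) * t⁻¹) := by
      have : 0 ≤ 1 - α / 2 := by linarith
      have : 0 ≤ α / 2 - 3 / 4 := by linarith
      positivity
    linarith

theorem hasFDerivAt_norm_rpow_of_ne {E : Type*} [NormedAddCommGroup E] [InnerProductSpace ℝ E]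
    {x : E} (hx : x ≠ 0) (s : ℝ) :
    HasFDerivAt (fun y : E => ‖y‖ ^ s) ((s * ‖x‖ ^ (s - 2)) • innerSL ℝ x) x := by
  have hpos : 0 < ‖x‖ := norm_pos_iff.2 hx
  have h := (hasStrictFDerivAt_norm_sq x).hasFDerivAt.rpow_const (p := s / 2)
    (Or.inl (by positivity))
  have key : ∀ (y : E) (q : ℝ), (‖y‖ ^ 2) ^ q = ‖y‖ ^ (2 * q) := by
    intro y q
    rw [← Real.rpow_natCast, ← Real.rpow_mul (norm_nonneg y)]
    norm_num
  convert h using 1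
  · funext y
    rw [key]
    ring_nf
  · rw [key, ← Nat.cast_smul_eq_nsmul ℝ, smul_smul]
    congr 1
    push_cast
    ring_nf

variable {n : ℕ} [NeZero n]

/-- The space weight `x₁ ^ β - b |x| ^ β`. -/
noncomputable def spaceWeight (β b : ℝ) (x : EuclideanSpace ℝ (Fin n)) : ℝ :=
  x 0 ^ β - b * ‖x‖ ^ β

/-- The partial derivatives of `spaceWeight`. -/
noncomputable def spaceWeight₁ (β b : ℝ) (i : Fin n) (x : EuclideanSpace ℝ (Fin n)) : ℝ :=
  β * ((if i = 0 then x 0 ^ (β - 1) else 0) - b * (x i * ‖x‖ ^ (β - 2)))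

/-- The second partial derivatives of `spaceWeight`. -/
noncomputable def spaceWeight₂ (β b : ℝ) (i j : Fin n) (x : EuclideanSpace ℝ (Fin n)) : ℝ :=
  β * ((if j = 0 then (if i = 0 then (β - 1) * x 0 ^ (β - 2) else 0) else 0)
    - b * ((if i = j then ‖x‖ ^ (β - 2) else 0) + (β - 2) * (x i * x j * ‖x‖ ^ (β - 4))))

theorem hasFDerivAt_coord_rpow {x : EuclideanSpace ℝ (Fin n)} (hx : 0 < x 0) (s : ℝ) :
    HasFDerivAt (fun y : EuclideanSpace ℝ (Fin n) => y 0 ^ s)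
      ((s * x 0 ^ (s - 1)) • (EuclideanSpace.proj 0 : EuclideanSpace ℝ (Fin n) →L[ℝ] ℝ)) x :=
  (EuclideanSpace.proj 0 : EuclideanSpace ℝ (Fin n) →L[ℝ] ℝ).hasFDerivAt.rpow_const
    (Or.inl hx.ne')

theorem ne_zero_of_coord_pos {x : EuclideanSpace ℝ (Fin n)} (hx : 0 < x 0) : x ≠ 0 := by
  rintro rfl
  simp at hx

theorem hasFDerivAt_spaceWeight {x : EuclideanSpace ℝ (Fin n)} (hx : 0 < x 0) (β b : ℝ) :
    ∃ A : EuclideanSpace ℝ (Fin n) →L[ℝ] ℝ, HasFDerivAt (spaceWeight β b) A x ∧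
      ∀ i, A (EuclideanSpace.single i 1) = spaceWeight₁ β b i x := by
  refine ⟨_, (hasFDerivAt_coord_rpow hx β).sub
    ((hasFDerivAt_norm_rpow_of_ne (ne_zero_of_coord_pos hx) β).const_mul b), fun i => ?_⟩
  simp [spaceWeight₁, EuclideanSpace.inner_single_right, PiLp.single_apply, eq_comm (a := i)]
  split_ifs <;> ring

theorem hasFDerivAt_spaceWeight₁ {x : EuclideanSpace ℝ (Fin n)} (hx : 0 < x 0) (β b : ℝ)
    (j : Fin n) :
    ∃ A : EuclideanSpace ℝ (Fin n) →L[ℝ] ℝ, HasFDerivAt (spaceWeight₁ β b j) A x ∧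
      ∀ i, A (EuclideanSpace.single i 1) = spaceWeight₂ β b i j x := by
  have h₁ : HasFDerivAt (fun y : EuclideanSpace ℝ (Fin n) => if j = 0 then y 0 ^ (β - 1) else 0)
      (if j = 0 then ((β - 1) * x 0 ^ (β - 1 - 1)) •
        (EuclideanSpace.proj 0 : EuclideanSpace ℝ (Fin n) →L[ℝ] ℝ) else 0) x := by
    split_ifs
    · exact hasFDerivAt_coord_rpow hx _
    · exact hasFDerivAt_const _ _
  have h₂ := (EuclideanSpace.proj j : EuclideanSpace ℝ (Fin n) →L[ℝ] ℝ).hasFDerivAt (x := x)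
  refine ⟨_, (h₁.sub ((h₂.fun_mul (hasFDerivAt_norm_rpow_of_ne (ne_zero_of_coord_pos hx)
    (β - 2))).const_mul b)).const_mul β, fun i => ?_⟩
  have e₁ : β - 2 - 2 = β - 4 := by ring
  have e₂ : β - 1 - 1 = β - 2 := by ring
  by_cases hj : j = 0 <;> by_cases hi : i = 0 <;> by_cases hij : i = j <;>
    simp_all [-mul_eq_mul_left_iff, -mul_eq_mul_right_iff, spaceWeight₂,
      EuclideanSpace.inner_single_right] <;> ring

theorem sum_spaceWeight₂_mul_mul (β b : ℝ) (x : EuclideanSpace ℝ (Fin n)) (w : Fin n → ℝ) :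
    ∑ i, ∑ j, spaceWeight₂ β b i j x * w i * w j =
      β * ((β - 1) * x 0 ^ (β - 2) * w 0 ^ 2 - b * (‖x‖ ^ (β - 2) * ∑ i, w i ^ 2
        + (β - 2) * ‖x‖ ^ (β - 4) * (∑ i, x i * w i) ^ 2)) := by
  have h : ∀ i j, spaceWeight₂ β b i j x * w i * w j =
      (if j = 0 then (if i = 0 then β * ((β - 1) * x 0 ^ (β - 2)) * w i * w j else 0) else 0)
      - (if i = j then β * b * ‖x‖ ^ (β - 2) * w i * w j else 0)
      - β * b * ((β - 2) * ‖x‖ ^ (β - 4)) * ((x i * w i) * (x j * w j)) := by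
    intro i j
    rw [spaceWeight₂]
    split_ifs <;> ring
  have e : β * b * ‖x‖ ^ (β - 2) * ∑ i, w i ^ 2 =
      ∑ i, β * b * ‖x‖ ^ (β - 2) * w i * w i := by
    rw [Finset.mul_sum]
    exact Finset.sum_congr rfl fun i _ => by ring
  simp only [h, Finset.sum_sub_distrib, ← Finset.mul_sum, Finset.sum_ite_eq, Finset.sum_ite_eq',
    Finset.mem_univ, if_true, ← Finset.sum_mul, ← e]
  ring

theorem sum_spaceWeight₂_diag {x : EuclideanSpace ℝ (Fin n)} (hx : 0 < ‖x‖) (β b : ℝ) :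
    ∑ i, spaceWeight₂ β b i i x =
      β * ((β - 1) * x 0 ^ (β - 2) - b * ((n + β - 2) * ‖x‖ ^ (β - 2))) := by
  have h : ∀ i, spaceWeight₂ β b i i x =
      (if i = 0 then β * ((β - 1) * x 0 ^ (β - 2)) else 0)
      - β * b * ‖x‖ ^ (β - 2) - β * b * ((β - 2) * ‖x‖ ^ (β - 4)) * x i ^ 2 := by
    intro i
    simp only [spaceWeight₂, if_true]
    split_ifs <;> ring
  have e : ‖x‖ ^ (β - 2) = ‖x‖ ^ (β - 4) * ‖x‖ ^ 2 := by
    rw [← Real.rpow_two, ← Real.rpow_add hx]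
    ring_nf
  simp only [h, Finset.sum_sub_distrib, ← Finset.mul_sum, Finset.sum_ite_eq',
    Finset.mem_univ, if_true, Finset.sum_const, Finset.card_univ, Fintype.card_fin, nsmul_eq_mul,
    ← EuclideanSpace.real_norm_sq_eq, e]
  ring

theorem sum_spaceWeight₁_sq {x : EuclideanSpace ℝ (Fin n)} (hx : 0 < x 0) (β b : ℝ) :
    ∑ i, spaceWeight₁ β b i x ^ 2 =
      β ^ 2 * (x 0 ^ 2 * (x 0 ^ (β - 2) - b * ‖x‖ ^ (β - 2)) ^ 2
        + b ^ 2 * (‖x‖ ^ (β - 2)) ^ 2 * (‖x‖ ^ 2 - x 0 ^ 2)) := by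
  have e : x 0 ^ (β - 1) = x 0 ^ (β - 2) * x 0 := by
    rw [← Real.rpow_add_one hx.ne']
    ring_nf
  have h : ∀ i, spaceWeight₁ β b i x ^ 2 =
      (if i = 0 then β ^ 2 * ((x 0 ^ (β - 2) * x 0) ^ 2
        - 2 * b * (x 0 ^ (β - 2) * x 0) * (x i * ‖x‖ ^ (β - 2))) else 0)
      + β ^ 2 * b ^ 2 * (‖x‖ ^ (β - 2)) ^ 2 * x i ^ 2 := by
    intro i
    rw [spaceWeight₁, e]
    split_ifs <;> ring
  simp only [h, Finset.sum_add_distrib, ← Finset.mul_sum, Finset.sum_ite_eq',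
    Finset.mem_univ, if_true, ← EuclideanSpace.real_norm_sq_eq]
  ring

theorem coord_le_norm (x : EuclideanSpace ℝ (Fin n)) : x 0 ≤ ‖x‖ :=
  (le_abs_self _).trans (by simpa using PiLp.norm_apply_le x 0)

theorem spaceWeight_bounds {α ε : ℝ} (hα : α ∈ Ioo (3 / 2 : ℝ) 2) (hε : ε ∈ Ioo (0 : ℝ) 1)
    (hb3 : ε ^ α < 1 / 3) (hbα : 4 * ε ^ α < α * (1 - ε ^ α))
    (hC : 2 * (ε ^ α) ^ 3 * (1 - ε ^ 2) < (α - 1 - 2 * ε ^ α) * ε ^ 2 * (1 - ε ^ α) ^ 2)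
    {x : EuclideanSpace ℝ (Fin n)} (hx1 : 1 < x 0) (hx : ε * ‖x‖ < x 0) :
    0 ≤ spaceWeight α (ε ^ α) x ∧
    (α * (1 - ε ^ α) * ε) ^ 2 ≤ ∑ i, spaceWeight₁ α (ε ^ α) i x ^ 2 ∧
    2 * (2 * α * ε ^ α * ‖x‖ ^ (α - 2) * spaceWeight α (ε ^ α) x) ≤
      ∑ i, spaceWeight₁ α (ε ^ α) i x ^ 2 ∧
    (2 * α * ε ^ α * ‖x‖ ^ (α - 2)) ^ 2 ≤ ∑ i, spaceWeight₁ α (ε ^ α) i x ^ 2 ∧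
    (∀ w : Fin n → ℝ, 0 ≤ 2 * ∑ i, ∑ j, spaceWeight₂ α (ε ^ α) i j x * w i * w j
      + 2 * α * ε ^ α * ‖x‖ ^ (α - 2) * ∑ i, w i ^ 2) ∧
    2 * α * ε ^ α * ‖x‖ ^ (α - 2) * ∑ i, spaceWeight₁ α (ε ^ α) i x ^ 2 ≤
      2 * ∑ i, ∑ j, spaceWeight₂ α (ε ^ α) i j x *
        spaceWeight₁ α (ε ^ α) i x * spaceWeight₁ α (ε ^ α) j x := by
  obtain ⟨hα0, hα2⟩ := hα
  obtain ⟨hε0, hε1⟩ := hε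
  have hx0 : 0 < x 0 := by linarith
  have hxr : x 0 ≤ ‖x‖ := coord_le_norm x
  have hr : 0 < ‖x‖ := hx0.trans_le hxr
  have hb : 0 < ε ^ α := Real.rpow_pos_of_pos hε0 α
  have hα00 : 0 < α := by linarith
  have hΦ : (ε * ‖x‖) ^ α ≤ x 0 ^ α := Real.rpow_le_rpow (by positivity) hx.le hα00.le
  rw [Real.mul_rpow hε0.le hr.le] at hΦ
  set b := ε ^ α with hbdef
  have hz : 0 < ‖x‖ ^ (α - 2) := by positivity
  have hzy : ‖x‖ ^ (α - 2) ≤ x 0 ^ (α - 2) :=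
    Real.rpow_le_rpow_of_nonpos hx0 hxr (by linarith)
  have hxα : x 0 ^ α = x 0 ^ (α - 2) * x 0 ^ 2 := by
    rw [← Real.rpow_two (x 0), ← Real.rpow_add hx0]
    ring_nf
  have hrα : ‖x‖ ^ α = ‖x‖ ^ (α - 2) * ‖x‖ ^ 2 := by
    rw [← Real.rpow_two ‖x‖, ← Real.rpow_add hr]
    ring_nf
  have hzr : 1 ≤ ‖x‖ ^ (α - 2) * ‖x‖ := by
    rw [← Real.rpow_add_one hr.ne']
    exact Real.one_le_rpow (by linarith) (by linarith)
  have hΦ₁ : 0 < spaceWeight₁ α b 0 x ∧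
      spaceWeight₁ α b 0 x = α * x 0 * (x 0 ^ (α - 2) - b * ‖x‖ ^ (α - 2)) := by
    have e : spaceWeight₁ α b 0 x = α * x 0 * (x 0 ^ (α - 2) - b * ‖x‖ ^ (α - 2)) := by
      have : x 0 ^ (α - 1) = x 0 ^ (α - 2) * x 0 := by
        rw [← Real.rpow_add_one hx0.ne']
        ring_nf
      rw [spaceWeight₁, if_pos rfl, this]
      ring
    refine ⟨?_, e⟩
    rw [e]
    have : 0 < x 0 ^ (α - 2) - b * ‖x‖ ^ (α - 2) := by nlinarith
    positivity
  rw [sum_spaceWeight₁_sq hx0, sum_spaceWeight₂_mul_mul, sum_spaceWeight₁_sq hx0, hΦ₁.2,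
    spaceWeight, hxα, hrα]
  rw [hxα, hrα] at hΦ
  set z := ‖x‖ ^ (α - 2)
  set y := x 0 ^ (α - 2)
  have hz4 : 0 ≤ ‖x‖ ^ (α - 4) := by positivity
  set z₄ := ‖x‖ ^ (α - 4)
  set r := ‖x‖
  set ξ := x 0
  have hd : (1 - b) * z ≤ y - b * z := by linarith
  have hd0 : 0 < (1 - b) * z := mul_pos (by linarith) hz
  have hG₀ : 0 ≤ b ^ 2 * z ^ 2 * (r ^ 2 - ξ ^ 2) :=
    mul_nonneg (by positivity) (sub_nonneg.2 (pow_le_pow_left₀ hx0.le hxr 2))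
  have hG : (α * (ξ * (y - b * z))) ^ 2 ≤
      α ^ 2 * (ξ ^ 2 * (y - b * z) ^ 2 + b ^ 2 * z ^ 2 * (r ^ 2 - ξ ^ 2)) := by
    nlinarith [mul_nonneg (sq_nonneg α) hG₀]
  refine ⟨by linarith, le_trans ?_ hG, le_trans ?_ hG, le_trans ?_ hG, fun w => ?_, ?_⟩
  · refine pow_le_pow_left₀ (by have : 0 < 1 - b := by linarith
                                positivity) ?_ 2
    rw [mul_assoc]
    refine mul_le_mul_of_nonneg_left ?_ hα00.le
    calc (1 - b) * ε ≤ (1 - b) * ε * (z * r) :=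
          le_mul_of_one_le_right (mul_nonneg (by linarith) hε0.le) hzr
      _ = (ε * r) * ((1 - b) * z) := by ring
      _ ≤ ξ * (y - b * z) := by gcongr
  · have h₁ : y * ξ ^ 2 - b * (z * r ^ 2) ≤ ξ ^ 2 * (y - b * z) := by
      have : b * z * ξ ^ 2 ≤ b * z * r ^ 2 := by gcongr
      linarith
    have h₂ : 4 * b * z ≤ α * (y - b * z) := by
      have : 4 * b * z ≤ α * (1 - b) * z := by gcongr
      nlinarith
    calc 2 * (2 * α * b * z * (y * ξ ^ 2 - b * (z * r ^ 2)))
        ≤ 2 * (2 * α * b * z * (ξ ^ 2 * (y - b * z))) := by gcongr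
      _ = α * ξ ^ 2 * (y - b * z) * (4 * b * z) := by ring
      _ ≤ α * ξ ^ 2 * (y - b * z) * (α * (y - b * z)) := by
          refine mul_le_mul_of_nonneg_left h₂ ?_
          have : 0 ≤ y - b * z := by linarith
          positivity
      _ = _ := by ring
  · refine pow_le_pow_left₀ (by positivity) ?_ 2
    calc 2 * α * b * z = α * (2 * b * z) := by ring
      _ ≤ α * ((1 - b) * z) := by
        have : 2 * b ≤ 1 - b := by linarith
        gcongr
      _ ≤ α * (y - b * z) := by gcongr
      _ ≤ α * (ξ * (y - b * z)) := by
        refine mul_le_mul_of_nonneg_left (le_mul_of_one_le_left (by linarith) hx1.le) hα00.le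
  · have h₁ : 0 ≤ α * (α - 1) * y * w 0 ^ 2 := by
      have : 0 ≤ α - 1 := by linarith
      positivity
    have h₂ : 0 ≤ α * b * (2 - α) * z₄ * (∑ i, x i * w i) ^ 2 := by
      have : 0 ≤ 2 - α := by linarith
      positivity
    rw [sum_spaceWeight₂_mul_mul]
    linarith
  · have h₂ : 0 ≤ α * b * (2 - α) * z₄ * (∑ i, x i * spaceWeight₁ α b i x) ^ 2 := by
      have : 0 ≤ 2 - α := by linarith
      positivity
    have h₃ := cubic_bound hb hb3 hε0 hε1 hC hz hzy (ξ := ξ) (ρ := r ^ 2)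
      (by rw [← mul_pow]; exact pow_le_pow_left₀ (by positivity) hx.le 2)
    have h₄ := mul_le_mul_of_nonneg_left h₃ (show 0 ≤ 2 * α ^ 3 by positivity)
    linarith

end Weights

section Cutoff

variable {V : Type*} [NormedAddCommGroup V] [NormedSpace ℝ V]

theorem exists_contDiff_eventuallyEq [FiniteDimensional ℝ V] {K Ω : Set V} {g : V → ℝ}
    (hK : IsCompact K) (hΩ : IsOpen Ω) (hKΩ : K ⊆ Ω) (hg : ContDiffOn ℝ ∞ g Ω) :
    ∃ f : V → ℝ, ContDiff ℝ ∞ f ∧ ∀ p ∈ K, f =ᶠ[𝓝 p] g := by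
  obtain ⟨L, hL, hKL, hLΩ⟩ := exists_compact_between hK hΩ hKΩ
  obtain ⟨χ, hχ1, hχ0, -⟩ := exists_contMDiffMap_one_nhds_of_subset_interior
    (modelWithCornersSelf ℝ V) (n := (⊤ : ℕ∞)) hK.isClosed hKL
  have hχ : ContDiff ℝ ∞ χ := χ.contMDiff.contDiff
  refine ⟨fun p => χ p * g p, contDiff_iff_contDiffAt.2 fun p => ?_, fun p hp => ?_⟩
  · by_cases hp : p ∈ Ω
    · exact hχ.contDiffAt.mul (hg.contDiffAt (hΩ.mem_nhds hp))
    · refine contDiffAt_const (c := (0 : ℝ)) |>.congr_of_eventuallyEq ?_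
      filter_upwards [hL.isClosed.isOpen_compl.mem_nhds fun h => hp (hLΩ h)] with q hq
      rw [hχ0 q hq, zero_mul]
  · filter_upwards [eventually_nhdsSet_iff_forall.1 hχ1 p hp] with q hq
    rw [hq, one_mul]

theorem dirDeriv_eq_of_eqOn {U : Set V} (hU : IsOpen U) {f g : V → ℝ} (h : EqOn f g U) {p : V}
    (hp : p ∈ U) (w : V) : dirDeriv w f p = dirDeriv w g p :=
  ((h.eventuallyEq_of_mem (hU.mem_nhds hp)).dirDeriv w).eq_of_nhds

theorem dirDeriv_separated {A : V → ℝ} {A' : V →L[ℝ] ℝ} {x : V} (hA : HasFDerivAt A A' x)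
    {l m : ℝ → ℝ} {l' m' t : ℝ} (hl : HasDerivAt l l' t) (hm : HasDerivAt m m' t) (w : V)
    (s : ℝ) : dirDeriv (w, s) (fun p : V × ℝ => l p.2 * A p.1 + m p.2) (x, t) =
      l t * A' w + s * (l' * A x + m') := by
  have h₁ : HasFDerivAt (fun p : V × ℝ => A p.1) (A'.comp (ContinuousLinearMap.fst ℝ V ℝ))
      (x, t) := HasFDerivAt.comp (x, t) (f := Prod.fst) hA hasFDerivAt_fst
  have h₂ : ∀ {k : ℝ → ℝ} {k' : ℝ}, HasDerivAt k k' t → HasFDerivAt (fun p : V × ℝ => k p.2)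
      (k' • ContinuousLinearMap.snd ℝ V ℝ) (x, t) := fun hk =>
    HasDerivAt.comp_hasFDerivAt (x, t) (f := Prod.snd) hk hasFDerivAt_snd
  rw [(((h₂ hl).fun_mul h₁).fun_add (h₂ hm)).dirDeriv_eq]
  simp
  ring

end Cutoff

section CarlemanWeight

variable {n : ℕ} [NeZero n]

/-- The points of space-time at which the Carleman weight is smooth. -/
def regularRegion (n : ℕ) [NeZero n] : Set (EuclideanSpace ℝ (Fin n) × ℝ) :=
  {x | 0 < x 0} ×ˢ Ioi 0

theorem isOpen_regularRegion : IsOpen (regularRegion n) :=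
  (isOpen_lt continuous_const (by fun_prop)).prod isOpen_Ioi

theorem mk_mem_regularRegion {x : EuclideanSpace ℝ (Fin n)} {t : ℝ} (hx : 0 < x 0)
    (ht : 0 < t) : (x, t) ∈ regularRegion n :=
  ⟨hx, ht⟩

/-- The Carleman weight `a Λ(t) (x₁ ^ α - b |x| ^ α) + t²`. -/
noncomputable def carlemanWeight (α b a : ℝ) : EuclideanSpace ℝ (Fin n) × ℝ → ℝ := fun p =>
  a * timeWeight α p.2 * spaceWeight α b p.1 + p.2 ^ 2

/-- The multiplier `a Λ(t) α (α - 1) (x₁ ^ (α - 2) - b' |x| ^ (α - 2)) + 1 / 4` with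
`(α - 1) b' = b (n + α - 4)`. -/
noncomputable def carlemanMultiplier (α b a : ℝ) : EuclideanSpace ℝ (Fin n) × ℝ → ℝ := fun p =>
  a * (α * (α - 1)) * timeWeight α p.2 *
    spaceWeight (α - 2) (b * (n + α - 4) / (α - 1)) p.1 + 1 / 4

theorem contDiffOn_timeWeight (α : ℝ) :
    ContDiffOn ℝ ∞ (fun p : EuclideanSpace ℝ (Fin n) × ℝ => timeWeight α p.2)
      (regularRegion n) := by
  intro p hp
  have ht : 0 < p.2 := hp.2
  refine ContDiffAt.contDiffWithinAt ?_
  unfold timeWeight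
  exact ContDiffAt.div (by fun_prop) (contDiffAt_snd.rpow_const_of_ne ht.ne')
    (Real.rpow_pos_of_pos ht _).ne'

theorem contDiffOn_spaceWeight (β b : ℝ) :
    ContDiffOn ℝ ∞ (fun p : EuclideanSpace ℝ (Fin n) × ℝ => spaceWeight β b p.1)
      (regularRegion n) := by
  intro p hp
  have hx : 0 < p.1 0 := hp.1
  have hx0 := ne_zero_of_coord_pos hx
  refine ContDiffAt.contDiffWithinAt ?_
  unfold spaceWeight
  refine ContDiffAt.sub ?_ (contDiffAt_const.mul ?_)
  · have h : ContDiffAt ℝ ∞ (fun p : EuclideanSpace ℝ (Fin n) × ℝ => p.1 0) p := by fun_prop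
    exact h.rpow_const_of_ne hx.ne'
  · exact (contDiffAt_fst.norm ℝ hx0).rpow_const_of_ne (norm_ne_zero_iff.2 hx0)

section Derivatives

variable {x : EuclideanSpace ℝ (Fin n)} {t : ℝ} (hx : 0 < x 0) (ht : 0 < t) (α b a : ℝ)

include hx ht

theorem dirDeriv_carlemanWeight_space (i : Fin n) :
    dirDeriv (EuclideanSpace.single i 1, 0) (carlemanWeight α b a) (x, t) =
      a * timeWeight α t * spaceWeight₁ α b i x := by
  obtain ⟨A, hA, hA'⟩ := hasFDerivAt_spaceWeight hx α b
  have := dirDeriv_separated hA ((hasDerivAt_timeWeight (α := α) ht).const_mul a)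
    (hasDerivAt_pow 2 t) (EuclideanSpace.single i 1) 0
  rw [hA'] at this
  exact this.trans (by simp)

theorem dirDeriv_carlemanWeight_time :
    dirDeriv (0, 1) (carlemanWeight α b a) (x, t) =
      -(a * timeWeight₁ α t) * spaceWeight α b x + 2 * t := by
  obtain ⟨A, hA, hA'⟩ := hasFDerivAt_spaceWeight hx α b
  have := dirDeriv_separated hA ((hasDerivAt_timeWeight (α := α) ht).const_mul a)
    (hasDerivAt_pow 2 t) 0 1
  exact this.trans (by simp)

theorem dirDeriv_carlemanWeight_space_space (i j : Fin n) :
    dirDeriv (EuclideanSpace.single i 1, 0)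
      (dirDeriv (EuclideanSpace.single j 1, 0) (carlemanWeight α b a)) (x, t) =
      a * timeWeight α t * spaceWeight₂ α b i j x := by
  obtain ⟨A, hA, hA'⟩ := hasFDerivAt_spaceWeight₁ hx α b j
  have := dirDeriv_separated hA ((hasDerivAt_timeWeight (α := α) ht).const_mul a)
    (hasDerivAt_const t 0) (EuclideanSpace.single i 1) 0
  rw [hA'] at this
  rw [dirDeriv_eq_of_eqOn isOpen_regularRegion
    (fun p hp => dirDeriv_carlemanWeight_space hp.1 hp.2 α b a j) (mk_mem_regularRegion hx ht)]
  simpa using this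

theorem dirDeriv_carlemanWeight_time_space (j : Fin n) :
    dirDeriv (0, 1) (dirDeriv (EuclideanSpace.single j 1, 0) (carlemanWeight α b a)) (x, t) =
      -(a * timeWeight₁ α t) * spaceWeight₁ α b j x := by
  obtain ⟨A, hA, hA'⟩ := hasFDerivAt_spaceWeight₁ hx α b j
  have := dirDeriv_separated hA ((hasDerivAt_timeWeight (α := α) ht).const_mul a)
    (hasDerivAt_const t 0) 0 1
  rw [dirDeriv_eq_of_eqOn isOpen_regularRegion
    (fun p hp => dirDeriv_carlemanWeight_space hp.1 hp.2 α b a j) (mk_mem_regularRegion hx ht)]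
  simpa using this

theorem dirDeriv_carlemanWeight_time_time :
    dirDeriv (0, 1) (dirDeriv (0, 1) (carlemanWeight α b a)) (x, t) =
      a * timeWeight₂ α t * spaceWeight α b x + 2 := by
  obtain ⟨A, hA, hA'⟩ := hasFDerivAt_spaceWeight hx α b
  have := dirDeriv_separated hA ((hasDerivAt_timeWeight₁ (α := α) ht).const_mul a).neg
    ((hasDerivAt_id t).const_mul 2) 0 1
  rw [dirDeriv_eq_of_eqOn isOpen_regularRegion
    (fun p hp => dirDeriv_carlemanWeight_time hp.1 hp.2 α b a) (mk_mem_regularRegion hx ht)]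
  simpa using this

theorem dirDeriv_carlemanMultiplier (i : Fin n) :
    dirDeriv (EuclideanSpace.single i 1, 0)
      (dirDeriv (EuclideanSpace.single i 1, 0) (carlemanMultiplier α b a)) (x, t) =
      a * (α * (α - 1)) * timeWeight α t *
        spaceWeight₂ (α - 2) (b * (n + α - 4) / (α - 1)) i i x := by
  have h : EqOn (dirDeriv (EuclideanSpace.single i 1, 0) (carlemanMultiplier α b a))
      (fun p => a * (α * (α - 1)) * timeWeight α p.2 *
        spaceWeight₁ (α - 2) (b * (n + α - 4) / (α - 1)) i p.1) (regularRegion n) := by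
    rintro ⟨y, s⟩ ⟨hy, hs⟩
    obtain ⟨A, hA, hA'⟩ := hasFDerivAt_spaceWeight hy (α - 2) (b * (n + α - 4) / (α - 1))
    have := dirDeriv_separated hA ((hasDerivAt_timeWeight (α := α) hs).const_mul
      (a * (α * (α - 1)))) (hasDerivAt_const s (1 / 4)) (EuclideanSpace.single i 1) 0
    rw [hA'] at this
    exact this.trans (by simp)
  obtain ⟨A, hA, hA'⟩ := hasFDerivAt_spaceWeight₁ hx (α - 2) (b * (n + α - 4) / (α - 1)) i
  have := dirDeriv_separated hA ((hasDerivAt_timeWeight (α := α) ht).const_mul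
    (a * (α * (α - 1)))) (hasDerivAt_const t 0) (EuclideanSpace.single i 1) 0
  rw [hA'] at this
  rw [dirDeriv_eq_of_eqOn isOpen_regularRegion h (mk_mem_regularRegion hx ht)]
  simpa using this

end Derivatives

theorem carlemanMultiplier_sub {x : EuclideanSpace ℝ (Fin n)} (hx : 0 < x 0) (t : ℝ) {α : ℝ}
    (hα : α ≠ 1) (b a : ℝ) :
    carlemanMultiplier α b a (x, t) - a * timeWeight α t * ∑ i, spaceWeight₂ α b i i x =
      a * timeWeight α t * (2 * α * b * ‖x‖ ^ (α - 2)) + 1 / 4 := by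
  have h : α - 1 ≠ 0 := sub_ne_zero.2 hα
  rw [sum_spaceWeight₂_diag (norm_pos_iff.2 (ne_zero_of_coord_pos hx)), carlemanMultiplier,
    spaceWeight]
  field_simp
  ring

theorem multiplier_laplacian_le {α b : ℝ} (hα : α ∈ Ioo (1 : ℝ) 2) (hb : 0 ≤ b)
    {x : EuclideanSpace ℝ (Fin n)} (hx : 1 < x 0) :
    α * (α - 1) * ∑ i, spaceWeight₂ (α - 2) (b * (n + α - 4) / (α - 1)) i i x ≤
      α * (α - 1) * (2 - α) * (3 - α) + b * α * (2 - α) * (n + α - 4) ^ 2 := by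
  obtain ⟨hα1, hα2⟩ := hα
  have hr : 1 < ‖x‖ := hx.trans_le (coord_le_norm x)
  have e : α - 1 ≠ 0 := by linarith
  have p₁ : x 0 ^ (α - 2 - 2) ≤ 1 := Real.rpow_le_one_of_one_le_of_nonpos hx.le (by linarith)
  have p₂ : ‖x‖ ^ (α - 2 - 2) ≤ 1 := Real.rpow_le_one_of_one_le_of_nonpos hr.le (by linarith)
  have q₁ : 0 ≤ α * (α - 1) * (2 - α) * (3 - α) := by
    have h₁ : 0 ≤ α - 1 := by linarith
    have h₂ : 0 ≤ 2 - α := by linarith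
    have h₃ : 0 ≤ 3 - α := by linarith
    positivity
  have q₂ : 0 ≤ b * α * (2 - α) * (n + α - 4) ^ 2 := by
    have h₂ : 0 ≤ 2 - α := by linarith
    positivity
  have h := add_le_add (mul_le_mul_of_nonneg_left p₁ q₁) (mul_le_mul_of_nonneg_left p₂ q₂)
  rw [mul_one, mul_one] at h
  refine le_of_eq_of_le ?_ h
  rw [sum_spaceWeight₂_diag (by linarith)]
  field_simp
  ring

theorem exists_carleman_pointwise_bound {α ε : ℝ} (hα : α ∈ Ioo (3 / 2 : ℝ) 2)
    (hε : ε ∈ Ioo (0 : ℝ) 1)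
    (hb3 : ε ^ α < 1 / 3) (hbα : 4 * ε ^ α < α * (1 - ε ^ α))
    (hC : 2 * (ε ^ α) ^ 3 * (1 - ε ^ 2) < (α - 1 - 2 * ε ^ α) * ε ^ 2 * (1 - ε ^ α) ^ 2) :
    ∃ a₀ : ℝ, 0 < a₀ ∧ ∀ a : ℝ, a₀ < a → ∀ {x : EuclideanSpace ℝ (Fin n)} {t : ℝ},
      1 < x 0 → ε * ‖x‖ < x 0 → t ∈ Ioo (0 : ℝ) 1 → ∀ (u : ℝ) (y : Fin n → ℝ) (r : ℝ),
      let φ := carlemanWeight α (ε ^ α) a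
      let h := carlemanMultiplier α (ε ^ α) a
      let e : Fin n → EuclideanSpace ℝ (Fin n) × ℝ := fun i => (EuclideanSpace.single i 1, 0)
      let τ : EuclideanSpace ℝ (Fin n) × ℝ := (0, 1)
      let w : Fin n → ℝ := fun i => r * (y i + dirDeriv (e i) φ (x, t) * u)
      1 / 4 * (r ^ 2 * (a * (timeWeight α t + spaceWeight α (ε ^ α) x) * u ^ 2
          + ∑ i, y i ^ 2)) ≤
        4 * ∑ i, ∑ j, dirDeriv (e i) (dirDeriv (e j) φ) (x, t) * w i * w j
        + 2 * (h (x, t) - ∑ j, dirDeriv (e j) (dirDeriv (e j) φ) (x, t)) * ∑ i, w i ^ 2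
        + (r * u) ^ 2 * (-∑ i, dirDeriv (e i) (dirDeriv (e i) h) (x, t)
          + dirDeriv τ (dirDeriv τ φ) (x, t)
          - 4 * ∑ j, dirDeriv (e j) φ (x, t) * dirDeriv τ (dirDeriv (e j) φ) (x, t)
          + 4 * ∑ i, ∑ j, dirDeriv (e i) (dirDeriv (e j) φ) (x, t) * dirDeriv (e i) φ (x, t)
            * dirDeriv (e j) φ (x, t)
          - 2 * (∑ j, dirDeriv (e j) φ (x, t) ^ 2 - dirDeriv τ φ (x, t))
            * (h (x, t) - ∑ j, dirDeriv (e j) (dirDeriv (e j) φ) (x, t))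
          - (h (x, t) - ∑ j, dirDeriv (e j) (dirDeriv (e j) φ) (x, t)) ^ 2) := by
  have hb : 0 < ε ^ α := Real.rpow_pos_of_pos hε.1 α
  have hα' : α ∈ Ioo (1 : ℝ) 2 := ⟨by linarith [hα.1], hα.2⟩
  have hα0 : 0 < α := by linarith [hα.1]
  have hκ : 0 < (α * (1 - ε ^ α) * ε) ^ 2 := by
    have : 0 < 1 - ε ^ α := by linarith
    have := hε.1
    positivity
  refine ⟨(α * (α - 1) * (2 - α) * (3 - α) + ε ^ α * α * (2 - α) * (n + α - 4) ^ 2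
    + α * ε ^ α + 1 / 4) / (α * (1 - ε ^ α) * ε) ^ 2, ?_, ?_⟩
  · have h₁ : 0 < α - 1 := by linarith [hα'.1]
    have h₂ : 0 < 2 - α := by linarith [hα.2]
    have h₃ : 0 < 3 - α := by linarith
    positivity
  intro a ha x t hx1 hx ht u y r φ h e τ w
  have ha0 : 0 < a := by
    refine lt_trans ?_ ha
    have h₁ : 0 < α - 1 := by linarith [hα'.1]
    have h₂ : 0 < 2 - α := by linarith [hα.2]
    have h₃ : 0 < 3 - α := by linarith
    positivity
  have hx0 : 0 < x 0 := by linarith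
  have hr : 1 < ‖x‖ := hx1.trans_le (coord_le_norm x)
  have hD := multiplier_laplacian_le (n := n) hα' hb.le hx1
  obtain ⟨hΛ, hΛL, hL₁, hL₂⟩ := timeWeight_bounds hα ht
  obtain ⟨hΦ, hκG, hgΦ, hgG, hQ, hQΦ⟩ := spaceWeight_bounds hα hε hb3 hbα hC hx1 hx
  have hg : 0 ≤ 2 * α * ε ^ α * ‖x‖ ^ (α - 2) := by positivity
  have hg1 : 2 * α * ε ^ α * ‖x‖ ^ (α - 2) ≤ 2 * α * ε ^ α :=
    mul_le_of_le_one_right (by positivity)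
      (Real.rpow_le_one_of_one_le_of_nonpos hr.le (by linarith [hα.2]))
  rw [div_lt_iff₀ hκ] at ha
  have hw : ∀ i, w i = r * (y i + a * timeWeight α t * spaceWeight₁ α (ε ^ α) i x * u) := by
    intro i
    simp only [w, e, φ]
    rw [dirDeriv_carlemanWeight_space hx0 ht.1]
  have hS : ∑ i, (r * y i) ^ 2 ≤ 2 * ∑ i, w i ^ 2
      + 2 * (a * timeWeight α t) ^ 2 * (∑ i, spaceWeight₁ α (ε ^ α) i x ^ 2) * (r * u) ^ 2 := by
    rw [Finset.mul_sum, mul_assoc, Finset.sum_mul, Finset.mul_sum, ← Finset.sum_add_distrib]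
    refine Finset.sum_le_sum fun i _ => ?_
    rw [hw]
    nlinarith [sq_nonneg (r * y i + 2 * (r * (a * timeWeight α t *
      spaceWeight₁ α (ε ^ α) i x * u)))]
  have key := carleman_scalar_bound (t := t) (v := r * u) ha0 hΛ hΛL hL₁ hL₂ ht.1.le hΦ hκG hg
    hgΦ hgG (show α * (α - 1) *
        ∑ i, spaceWeight₂ (α - 2) (ε ^ α * (n + α - 4) / (α - 1)) i i x
      + 2 * α * ε ^ α * ‖x‖ ^ (α - 2) / 2 + 1 / 4 ≤ a * (α * (1 - ε ^ α) * ε) ^ 2 by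
      refine le_trans ?_ ha.le
      linarith) (hQ w) hQΦ hS
  have s₁ : h (x, t) - ∑ j, dirDeriv (e j) (dirDeriv (e j) φ) (x, t) =
      a * timeWeight α t * (2 * α * ε ^ α * ‖x‖ ^ (α - 2)) + 1 / 4 := by
    simp only [h, e, φ, dirDeriv_carlemanWeight_space_space hx0 ht.1, ← Finset.mul_sum]
    exact carlemanMultiplier_sub hx0 t hα'.1.ne' _ a
  have s₂ : ∑ i, ∑ j, dirDeriv (e i) (dirDeriv (e j) φ) (x, t) * w i * w j =
      a * timeWeight α t * ∑ i, ∑ j, spaceWeight₂ α (ε ^ α) i j x * w i * w j := by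
    simp only [e, φ, dirDeriv_carlemanWeight_space_space hx0 ht.1, Finset.mul_sum]
    exact Finset.sum_congr rfl fun i _ => Finset.sum_congr rfl fun j _ => by ring
  have s₃ : ∑ i, dirDeriv (e i) (dirDeriv (e i) h) (x, t) = a * timeWeight α t *
      (α * (α - 1) *
        ∑ i, spaceWeight₂ (α - 2) (ε ^ α * (n + α - 4) / (α - 1)) i i x) := by
    simp only [e, h, dirDeriv_carlemanMultiplier hx0 ht.1, ← Finset.mul_sum]
    ring
  have s₄ : ∑ j, dirDeriv (e j) φ (x, t) * dirDeriv τ (dirDeriv (e j) φ) (x, t) =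
      a * timeWeight α t * (-(a * timeWeight₁ α t)) * ∑ i, spaceWeight₁ α (ε ^ α) i x ^ 2 := by
    simp only [e, φ, τ, dirDeriv_carlemanWeight_space hx0 ht.1,
      dirDeriv_carlemanWeight_time_space hx0 ht.1, Finset.mul_sum]
    exact Finset.sum_congr rfl fun i _ => by ring
  have s₅ : ∑ i, ∑ j, dirDeriv (e i) (dirDeriv (e j) φ) (x, t) * dirDeriv (e i) φ (x, t)
        * dirDeriv (e j) φ (x, t) =
      (a * timeWeight α t) ^ 3 * ∑ i, ∑ j, spaceWeight₂ α (ε ^ α) i j x *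
        spaceWeight₁ α (ε ^ α) i x * spaceWeight₁ α (ε ^ α) j x := by
    simp only [e, φ, dirDeriv_carlemanWeight_space hx0 ht.1,
      dirDeriv_carlemanWeight_space_space hx0 ht.1, Finset.mul_sum]
    exact Finset.sum_congr rfl fun i _ => Finset.sum_congr rfl fun j _ => by ring
  have s₆ : ∑ j, dirDeriv (e j) φ (x, t) ^ 2 =
      (a * timeWeight α t) ^ 2 * ∑ i, spaceWeight₁ α (ε ^ α) i x ^ 2 := by
    simp only [e, φ, dirDeriv_carlemanWeight_space hx0 ht.1, Finset.mul_sum, mul_pow]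
  have s₇ : dirDeriv τ φ (x, t) = _ := dirDeriv_carlemanWeight_time hx0 ht.1 α (ε ^ α) a
  have s₈ : dirDeriv τ (dirDeriv τ φ) (x, t) = _ :=
    dirDeriv_carlemanWeight_time_time hx0 ht.1 α (ε ^ α) a
  have s₉ : ∑ i, (r * y i) ^ 2 = r ^ 2 * ∑ i, y i ^ 2 := by
    simp only [mul_pow, Finset.mul_sum]
  rw [s₁, s₂, s₃, s₄, s₅, s₆, s₇, s₈]
  rw [s₉] at key
  linarith

end CarlemanWeight

section Slices

variable {n : ℕ}

theorem fderiv_slice_apply {V : Type*} [NormedAddCommGroup V] [NormedSpace ℝ V] {G : V × ℝ → ℝ}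
    (hG : ContDiff ℝ ∞ G) (x w : V) (t : ℝ) :
    fderiv ℝ (fun y => G (y, t)) x w = dirDeriv (w, 0) G (x, t) := by
  have h := HasFDerivAt.comp x (g := G) (f := fun y => (y, t))
    (hG.differentiable (by simp) (x, t)).hasFDerivAt (hasFDerivAt_prodMk_left x t)
  have e := h.fderiv
  simp only [Function.comp_def] at e
  rw [e]
  simp [dirDeriv]

theorem deriv_slice {V : Type*} [NormedAddCommGroup V] [NormedSpace ℝ V] {G : V × ℝ → ℝ}
    (hG : ContDiff ℝ ∞ G) (x : V) (t : ℝ) :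
    deriv (fun s => G (x, s)) t = dirDeriv (0, 1) G (x, t) := by
  have h := HasFDerivAt.comp t (g := G) (f := fun s => (x, s))
    (hG.differentiable (by simp) (x, t)).hasFDerivAt (hasFDerivAt_prodMk_right x t)
  have e := h.hasDerivAt.deriv
  simp only [Function.comp_def] at e
  rw [e]
  simp [dirDeriv]

theorem lap_slice {G : EuclideanSpace ℝ (Fin n) × ℝ → ℝ} (hG : ContDiff ℝ ∞ G)
    (x : EuclideanSpace ℝ (Fin n)) (t : ℝ) :
    lap (fun y => G (y, t)) x = ∑ i, dirDeriv (EuclideanSpace.single i 1, 0)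
      (dirDeriv (EuclideanSpace.single i 1, 0) G) (x, t) := by
  simp only [lap, fderiv_slice_apply hG]
  exact Finset.sum_congr rfl fun i _ => fderiv_slice_apply (hG.dirDeriv _) _ _ _

theorem norm_gradient_slice_sq {G : EuclideanSpace ℝ (Fin n) × ℝ → ℝ} (hG : ContDiff ℝ ∞ G)
    (x : EuclideanSpace ℝ (Fin n)) (t : ℝ) :
    ‖gradient (fun y => G (y, t)) x‖ ^ 2 =
      ∑ i, dirDeriv (EuclideanSpace.single i 1, 0) G (x, t) ^ 2 := by
  rw [EuclideanSpace.real_norm_sq_eq]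
  refine Finset.sum_congr rfl fun i _ => ?_
  rw [← fderiv_slice_apply hG, gradient, ← InnerProductSpace.toDual_symm_apply,
    EuclideanSpace.inner_single_right]
  simp

theorem setIntegral_setIntegral_eq_integral_prod {X Y : Type*} [MeasurableSpace X]
    [MeasurableSpace Y] {μ : Measure X} {ν : Measure Y} [SFinite μ] [SFinite ν] {Q : Set X}
    {T : Set Y} (hQ : MeasurableSet Q) (hT : MeasurableSet T) {F : X → Y → ℝ} {G : X × Y → ℝ}
    (hG : Integrable G (μ.prod ν)) (h0 : ∀ p ∉ Q ×ˢ T, G p = 0)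
    (hFG : ∀ x ∈ Q, ∀ t ∈ T, F x t = G (x, t)) :
    ∫ t in T, ∫ x in Q, F x t ∂μ ∂ν = ∫ p, G p ∂μ.prod ν := by
  rw [integral_prod_symm G hG, ← setIntegral_eq_integral_of_forall_compl_eq_zero (s := T)
    (f := fun t => ∫ x, G (x, t) ∂μ)]
  · refine setIntegral_congr_fun hT fun t ht => ?_
    rw [← setIntegral_eq_integral_of_forall_compl_eq_zero (s := Q) (f := fun x => G (x, t))
      fun x hx => h0 _ fun h => hx h.1]
    exact setIntegral_congr_fun hQ fun x hx => hFG x hx t ht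
  · intro t ht
    simp only [h0 _ fun h : (_, t) ∈ Q ×ˢ T => ht h.2, integral_zero]

end Slices

theorem carleman_of_tsupport_subset {n : ℕ} [NeZero n] {α ε a : ℝ}
    {Q : Set (EuclideanSpace ℝ (Fin n))} (hQ : IsOpen Q) (hQ0 : ∀ x ∈ Q, 0 < x 0)
    {u : EuclideanSpace ℝ (Fin n) × ℝ → ℝ} (hu : ContDiff ℝ ∞ u) (hc : HasCompactSupport u)
    (hs : tsupport u ⊆ Q ×ˢ Ioo 0 1)
    (hB : ∀ x ∈ Q, ∀ t ∈ Ioo (0 : ℝ) 1, ∀ (u : ℝ) (y : Fin n → ℝ) (r : ℝ),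
      let φ := carlemanWeight α (ε ^ α) a
      let h := carlemanMultiplier α (ε ^ α) a
      let e : Fin n → EuclideanSpace ℝ (Fin n) × ℝ := fun i => (EuclideanSpace.single i 1, 0)
      let τ : EuclideanSpace ℝ (Fin n) × ℝ := (0, 1)
      let w : Fin n → ℝ := fun i => r * (y i + dirDeriv (e i) φ (x, t) * u)
      1 / 4 * (r ^ 2 * (a * (timeWeight α t + spaceWeight α (ε ^ α) x) * u ^ 2
          + ∑ i, y i ^ 2)) ≤
        4 * ∑ i, ∑ j, dirDeriv (e i) (dirDeriv (e j) φ) (x, t) * w i * w j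
        + 2 * (h (x, t) - ∑ j, dirDeriv (e j) (dirDeriv (e j) φ) (x, t)) * ∑ i, w i ^ 2
        + (r * u) ^ 2 * (-∑ i, dirDeriv (e i) (dirDeriv (e i) h) (x, t)
          + dirDeriv τ (dirDeriv τ φ) (x, t)
          - 4 * ∑ j, dirDeriv (e j) φ (x, t) * dirDeriv τ (dirDeriv (e j) φ) (x, t)
          + 4 * ∑ i, ∑ j, dirDeriv (e i) (dirDeriv (e j) φ) (x, t) * dirDeriv (e i) φ (x, t)
            * dirDeriv (e j) φ (x, t)
          - 2 * (∑ j, dirDeriv (e j) φ (x, t) ^ 2 - dirDeriv τ φ (x, t))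
            * (h (x, t) - ∑ j, dirDeriv (e j) (dirDeriv (e j) φ) (x, t))
          - (h (x, t) - ∑ j, dirDeriv (e j) (dirDeriv (e j) φ) (x, t)) ^ 2)) :
    ∫ t in Ioo (0 : ℝ) 1, ∫ x in Q, Real.exp (2 * carlemanWeight α (ε ^ α) a (x, t)) *
        (a * (timeWeight α t + spaceWeight α (ε ^ α) x) * u (x, t) ^ 2 +
          ‖gradient (fun y => u (y, t)) x‖ ^ 2) ≤
      4 * ∫ t in Ioo (0 : ℝ) 1, ∫ x in Q, Real.exp (2 * carlemanWeight α (ε ^ α) a (x, t)) *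
        |deriv (fun s => u (x, s)) t + lap (fun y => u (y, t)) x| ^ 2 := by
  have hΩ : IsOpen (Q ×ˢ Ioo (0 : ℝ) 1) := hQ.prod isOpen_Ioo
  have hreg : Q ×ˢ Ioo (0 : ℝ) 1 ⊆ regularRegion n := fun p hp => ⟨hQ0 _ hp.1, hp.2.1⟩
  have cΛ := (contDiffOn_timeWeight (n := n) α).mono hreg
  have cΦ := fun β b => (contDiffOn_spaceWeight (n := n) β b).mono hreg
  obtain ⟨φ, hφ, hφe⟩ := exists_contDiff_eventuallyEq (g := carlemanWeight α (ε ^ α) a) hc hΩ hs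
    (((contDiffOn_const.mul cΛ).mul (cΦ _ _)).add (contDiff_snd.pow 2).contDiffOn)
  obtain ⟨h, hh, hhe⟩ := exists_contDiff_eventuallyEq (g := carlemanMultiplier α (ε ^ α) a)
    hc hΩ hs (((contDiffOn_const.mul cΛ).mul (cΦ _ _)).add contDiffOn_const)
  obtain ⟨ψ, hψ, hψe⟩ := exists_contDiff_eventuallyEq
    (g := fun p : EuclideanSpace ℝ (Fin n) × ℝ => timeWeight α p.2 + spaceWeight α (ε ^ α) p.1)
    hc hΩ hs (cΛ.add (cΦ _ _))
  set e : Fin n → EuclideanSpace ℝ (Fin n) × ℝ := fun i => (EuclideanSpace.single i 1, 0) with he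
  have u0 : ∀ p ∉ tsupport u, u =ᶠ[𝓝 p] fun _ => 0 := fun p hp =>
    notMem_tsupport_iff_eventuallyEq.1 hp
  have u1 : ∀ p ∉ tsupport u, ∀ w, dirDeriv w u =ᶠ[𝓝 p] fun _ => 0 := fun p hp w =>
    ((u0 p hp).dirDeriv w).trans (.of_forall fun q => dirDeriv_const 0 w q)
  have u2 : ∀ p ∉ tsupport u, ∀ w z, dirDeriv z (dirDeriv w u) p = 0 := fun p hp w z =>
    (((u1 p hp w).dirDeriv z).eq_of_nhds).trans (dirDeriv_const 0 z p)
  set B : EuclideanSpace ℝ (Fin n) × ℝ → ℝ := fun p =>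
    1 / 4 * (Real.exp (φ p) ^ 2 * (a * ψ p * u p ^ 2 + ∑ i, dirDeriv (e i) u p ^ 2)) with hBdef
  set R : EuclideanSpace ℝ (Fin n) × ℝ → ℝ := fun p =>
    (Real.exp (φ p) * (dirDeriv (0, 1) u p + ∑ i, dirDeriv (e i) (dirDeriv (e i) u) p)) ^ 2
    with hRdef
  have B0 : ∀ p ∉ tsupport u, B p = 0 := fun p hp => by
    simp [hBdef, (u0 p hp).eq_of_nhds, (u1 p hp _).eq_of_nhds]
  have R0 : ∀ p ∉ tsupport u, R p = 0 := fun p hp => by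
    simp [hRdef, (u1 p hp _).eq_of_nhds, u2 p hp]
  have hu1 : ∀ w, ContDiff ℝ ∞ (dirDeriv w u) := hu.dirDeriv
  have hu2 : ∀ w z, ContDiff ℝ ∞ (dirDeriv z (dirDeriv w u)) := fun w z => (hu1 w).dirDeriv z
  have hBi : Integrable B (volume.prod volume) := by
    refine ContDiff.integrable_of_hasCompactSupport ?_ (HasCompactSupport.intro hc B0)
    have : ContDiff ℝ ∞ fun p => ∑ i, dirDeriv (e i) u p ^ 2 :=
      ContDiff.sum fun i _ => (hu1 _).pow 2
    have := hφ.exp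
    fun_prop
  have hRi : Integrable R (volume.prod volume) := by
    refine ContDiff.integrable_of_hasCompactSupport ?_ (HasCompactSupport.intro hc R0)
    have : ContDiff ℝ ∞ fun p => ∑ i, dirDeriv (e i) (dirDeriv (e i) u) p :=
      ContDiff.sum fun i _ => hu2 _ _
    have := hu1 (0, 1)
    have := hφ.exp
    fun_prop
  have key : ∫ p, B p ∂(volume.prod volume) ≤ ∫ p, R p ∂(volume.prod volume) := by
    refine integral_le_integral_sq_exp_mul e (0, 1) hu hc hφ hh hBi fun p => ?_
    by_cases hp : p ∈ tsupport u
    · have hw : ∀ w, dirDeriv w φ p = dirDeriv w (carlemanWeight α (ε ^ α) a) p := fun w =>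
        ((hφe p hp).dirDeriv w).eq_of_nhds
      have hw2 : ∀ w z, dirDeriv z (dirDeriv w φ) p =
          dirDeriv z (dirDeriv w (carlemanWeight α (ε ^ α) a)) p := fun w z =>
        (((hφe p hp).dirDeriv w).dirDeriv z).eq_of_nhds
      have hh2 : ∀ w z, dirDeriv z (dirDeriv w h) p =
          dirDeriv z (dirDeriv w (carlemanMultiplier α (ε ^ α) a)) p := fun w z =>
        (((hhe p hp).dirDeriv w).dirDeriv z).eq_of_nhds
      have := hB p.1 (hs hp).1 p.2 (hs hp).2 (u p) (fun i => dirDeriv (e i) u p)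
        (Real.exp (φ p))
      simp only [dirDeriv_exp_mul hu hφ, hw, hw2, hh2, (hhe p hp).eq_of_nhds, hBdef,
        (hψe p hp).eq_of_nhds]
      exact this
    · rw [B0 p hp]
      simp [dirDeriv_exp_mul hu hφ, (u0 p hp).eq_of_nhds, (u1 p hp _).eq_of_nhds]
  have hexp : ∀ y : ℝ, Real.exp (2 * y) = Real.exp y ^ 2 := fun y => by
    rw [← Real.exp_nat_mul]
    norm_num
  have hQm := hQ.measurableSet
  rw [setIntegral_setIntegral_eq_integral_prod (G := fun p => 4 * B p) hQm measurableSet_Ioo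
      (hBi.const_mul 4) (fun p hp => by rw [B0 p fun h => hp (hs h), mul_zero]) ?_,
    setIntegral_setIntegral_eq_integral_prod (G := R) hQm measurableSet_Ioo hRi
      (fun p hp => R0 p fun h => hp (hs h)) ?_, integral_const_mul]
  · exact mul_le_mul_of_nonneg_left key (by norm_num)
  · intro x _ t _
    rw [lap_slice hu, deriv_slice hu, sq_abs, hexp, ← mul_pow]
    by_cases hp : (x, t) ∈ tsupport u
    · rw [← (hφe _ hp).eq_of_nhds]
    · rw [R0 _ hp]
      simp [(u1 _ hp _).eq_of_nhds, u2 _ hp]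
  · intro x _ t _
    rw [norm_gradient_slice_sq hu, hexp]
    by_cases hp : (x, t) ∈ tsupport u
    · have := (hψe _ hp).eq_of_nhds
      simp only [hBdef, (hφe _ hp).eq_of_nhds, this]
      ring
    · rw [B0 _ hp]
      simp [(u0 _ hp).eq_of_nhds, (u1 _ hp _).eq_of_nhds]

theorem mem_cone_two_mul_arccos {n : ℕ} [NeZero n] {ε : ℝ} (hε : ε ∈ Ioo (0 : ℝ) 1)
    {x : EuclideanSpace ℝ (Fin n)} : x ∈ cone n (2 * Real.arccos ε) ↔ ε * ‖x‖ < x 0 := by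
  rw [cone, Set.mem_ofPred_eq, mul_div_cancel_left₀ _ two_ne_zero,
    Real.cos_arccos (by linarith [hε.1]) hε.2.le, mul_comm]

theorem isOpen_cone (n : ℕ) [NeZero n] (θ : ℝ) : IsOpen (cone n θ) :=
  isOpen_lt (by fun_prop) (by fun_prop)

/-- The Carleman inequality in the cone `𝒪_θ`, `θ = 2 arccos ε`,
`ε ∈ (0, 1/√3)`, with weight `φ(x,t) = a Λ(t) φ̃(x) + t²`, where
`Λ(t) = (1-t)/t^{α/2}` and `φ̃(x) = x₁^α - ε^α |x|^α`:
for a suitable `α = α(ε) ∈ (1,2)` and all large `a`, for `u ∈ C₀^∞(Q_θ)`,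
`∫_{Q_θ} e^{2φ} (a (Λ + φ̃) u² + |∇u|²) ≤ 4 ∫_{Q_θ} e^{2φ} |∂ₜu + Δu|²`. -/
theorem carleman_cone (n : ℕ) [NeZero n] (hn : 2 ≤ n) (ε : ℝ)
    (hε : ε ∈ Set.Ioo (0 : ℝ) (1 / Real.sqrt 3)) :
    ∃ α ∈ Set.Ioo (1 : ℝ) 2, ∃ a₀ : ℝ, 0 < a₀ ∧
      ∀ a : ℝ, a₀ < a →
        ∀ u : EuclideanSpace ℝ (Fin n) → ℝ → ℝ,
          ContDiff ℝ (⊤ : ℕ∞) (fun p : EuclideanSpace ℝ (Fin n) × ℝ => u p.1 p.2) →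
          HasCompactSupport (fun p : EuclideanSpace ℝ (Fin n) × ℝ => u p.1 p.2) →
          tsupport (fun p : EuclideanSpace ℝ (Fin n) × ℝ => u p.1 p.2) ⊆
            (cone n (2 * Real.arccos ε) ∩ {x | 1 < x 0}) ×ˢ Set.Ioo (0 : ℝ) 1 →
          (∫ t in Set.Ioo (0 : ℝ) 1,
              ∫ x in cone n (2 * Real.arccos ε) ∩ {x | 1 < x 0},
                Real.exp (2 * (a * ((1 - t) / t ^ (α / 2)) *
                    (x 0 ^ α - ε ^ α * ‖x‖ ^ α) + t ^ 2)) *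
                  (a * ((1 - t) / t ^ (α / 2) + (x 0 ^ α - ε ^ α * ‖x‖ ^ α)) *
                      (u x t) ^ 2 +
                    ‖gradient (fun y => u y t) x‖ ^ 2))
            ≤ 4 * ∫ t in Set.Ioo (0 : ℝ) 1,
                ∫ x in cone n (2 * Real.arccos ε) ∩ {x | 1 < x 0},
                  Real.exp (2 * (a * ((1 - t) / t ^ (α / 2)) *
                      (x 0 ^ α - ε ^ α * ‖x‖ ^ α) + t ^ 2)) *
                    |deriv (u x) t + lap (fun y => u y t) x| ^ 2 := by
  have hε1 : ε ∈ Ioo (0 : ℝ) 1 := by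
    refine ⟨hε.1, hε.2.trans_le ?_⟩
    rw [div_le_one (by positivity)]
    exact Real.one_le_sqrt.2 (by norm_num)
  obtain ⟨α, hα, hb3, hbα, hC⟩ := exists_exponent hε
  obtain ⟨a₀, ha₀, hB⟩ := exists_carleman_pointwise_bound (n := n) hα hε1 hb3 hbα hC
  refine ⟨α, ⟨by linarith [hα.1], hα.2⟩, a₀, ha₀, fun a ha u hu hc hs => ?_⟩
  exact carleman_of_tsupport_subset
    ((isOpen_cone n _).inter (isOpen_lt (f := fun _ => (1 : ℝ))
      (g := fun x : EuclideanSpace ℝ (Fin n) => x 0) continuous_const (by fun_prop)))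
    (fun x hx => zero_lt_one.trans (show 1 < x 0 from hx.2)) hu hc hs fun x hx t ht =>
      hB a ha hx.2 ((mem_cone_two_mul_arccos hε1).1 hx.1) ht
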